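/- The invariant ring S[W'^*]^G is generated as an F_2-algebra by 11 homogeneous invariants, namely a homogeneous system of parameters of degrees 2, 3, 3, 4, 6, 7 together with 5 further homogeneous invariants of degrees 4, 5, 5, 6, 7; in particular, S[W'^*]^G is generated as an F_2-algebra by invariants of degree at most 7. -/

import Mathlib

set_option synthInstance.maxHeartbeats 1000000
set_option maxHeartbeats 1000000

open MvPolynomial


/-- The field with two elements. -/
abbrev F2 := ZMod 2

/-- `G = GL₃(𝔽₂)`. -/
abbrev G3 := GL (Fin 3) F2

/-- The generator `A` of `G`. -/
def Agen : G3 := ⟨!![1,0,1; 0,1,0; 0,0,1], !![1,0,1; 0,1,0; 0,0,1], by decide, by decide⟩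

/-- The generator `B` of `G`. -/
def Bgen : G3 := ⟨!![0,0,1; 1,0,0; 0,1,0], !![0,1,0; 0,0,1; 1,0,0], by decide, by decide⟩

/-- The matrix `D(A)` of the action on `W'^* = 𝔽₂⁶`. -/
def DA6 : Matrix (Fin 6) (Fin 6) F2 :=
  !![1,0,1,0,0,1; 0,1,0,0,0,0; 0,0,1,0,0,0; 0,0,0,1,1,0; 0,0,0,0,1,0; 0,0,0,0,0,1]

/-- The matrix `D(B)` of the action on `W'^* = 𝔽₂⁶`. -/
def DB6 : Matrix (Fin 6) (Fin 6) F2 :=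
  !![0,0,1,0,0,0; 1,0,0,0,0,0; 0,1,0,0,0,0; 0,0,0,0,0,1; 0,0,0,1,0,0; 0,0,0,0,1,0]

/-- The algebra endomorphism of `S[W'^*] = 𝔽₂[a,b,c,d,e,f]` induced by the right action of
`σ` on the linear forms (coefficient row vectors are multiplied on the right by `D σ`; in
particular the variable `Xᵢ` is sent to the linear form given by the `i`-th row of `D σ`). -/
noncomputable def polyAct (D : G3 →* GL (Fin 6) F2) (σ : G3) :
    MvPolynomial (Fin 6) F2 →ₐ[F2] MvPolynomial (Fin 6) F2 :=
  aeval (fun i => ∑ j, (D σ : Matrix (Fin 6) (Fin 6) F2) i j • X j)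

/-- The invariant ring `S[W'^*]^H` for a subgroup `H ≤ G`. -/
noncomputable def invH (D : G3 →* GL (Fin 6) F2) (H : Subgroup G3) :
    Subalgebra F2 (MvPolynomial (Fin 6) F2) where
  carrier := {p | ∀ σ ∈ H, polyAct D σ p = p}
  mul_mem' := fun ha hb σ hσ => by rw [map_mul, ha σ hσ, hb σ hσ]
  add_mem' := fun ha hb σ hσ => by rw [map_add, ha σ hσ, hb σ hσ]
  one_mem' := fun σ _ => map_one _
  zero_mem' := fun σ _ => map_zero _
  algebraMap_mem' := fun r σ _ => AlgHom.commutes _ r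

/-- The invariant ring `S[W'^*]^G`. -/
noncomputable def invG (D : G3 →* GL (Fin 6) F2) :
    Subalgebra F2 (MvPolynomial (Fin 6) F2) :=
  invH D ⊤


def c_p1 : List ℕ :=
  [1100, 2000, 10001, 11000, 20000, 100010, 101000, 110000, 200000]

def c_p2 : List ℕ :=
  [2100, 20001, 111000, 200010]

def c_ps : List ℕ :=
  [1200, 10002, 12000, 21000, 100020, 102000, 111000, 120000, 201000, 210000]

def c_E4 : List ℕ :=
  [4, 22, 40, 112, 121, 202, 211, 220, 400, 1102, 1120, 1201, 1210, 1300, 2002, 2020, 2101, 2110,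
   10003, 10012, 10021, 10102, 10201, 11002, 11020, 11101, 11200, 12010, 20011, 20020, 20101,
   20200, 21010, 100012, 100021, 100030, 100120, 100210, 101002, 101020, 101110, 101200, 102001,
   110002, 110011, 110020, 110200, 111001, 111010, 111100, 120100, 200002, 200011, 200110,
   200200, 201001, 210100]

def c_E6 : List ℕ :=
  [24, 42, 114, 141, 204, 222, 240, 402, 411, 420, 1104, 1140, 1401, 1410, 1500, 2004, 2040,
   2202, 2220, 3300, 4002, 4020, 4101, 4110, 10005, 10014, 10041, 10104, 10401, 11004, 11040,
   11202, 11400, 12102, 13200, 14010, 20022, 20040, 20202, 20400, 21201, 22020, 22101, 30003,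
   31002, 40011, 40020, 40101, 40200, 41010, 100014, 100041, 100050, 100140, 100410, 101004,
   101040, 101220, 101400, 102120, 103200, 104001, 110004, 110022, 110040, 110400, 112002,
   112020, 113100, 120021, 121020, 121200, 122010, 130002, 131001, 140100, 200004, 200022,
   200220, 200400, 201210, 202002, 202110, 210012, 211002, 211200, 212001, 220011, 220200,
   221100, 300030, 301020, 310020, 311010, 400002, 400011, 400110, 400200, 401001, 410100]

def c_E7 : List ℕ :=
  [124, 142, 214, 241, 412, 421, 1222, 1312, 1321, 1411, 2122, 2212, 2221, 2311, 10114, 10123,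
   10213, 10222, 11122, 11221, 12112, 12211, 20113, 20122, 20212, 20221, 21112, 21211, 100132,
   100141, 100222, 100231, 101122, 101212, 102121, 102211, 110212, 110221, 111112, 111121,
   111211, 112111, 120112, 120121, 121111, 200122, 200131, 200212, 200221, 201121, 201211,
   210112, 210121, 211111]

def c_D4 : List ℕ :=
  [4000, 22000, 40000, 112000, 121000, 202000, 211000, 220000, 400000]

def c_p3 : List ℕ :=
  [4100, 40001, 122000, 212000, 221000, 400010]

def c_g5 : List ℕ :=
  [1400, 10004, 14000, 41000, 100040, 104000, 122000, 140000, 212000, 221000, 401000, 410000]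

def c_D6 : List ℕ :=
  [24000, 42000, 114000, 141000, 204000, 222000, 240000, 402000, 411000, 420000]

def c_L : List ℕ :=
  [124000, 142000, 214000, 241000, 412000, 421000]

def rules2 : List (ℕ × List ℕ) :=
  [(40,
    [1000004, 3000000, 1000000200, 2000000000, 10100000000]),
   (1100000,
    [14, 121, 211, 301, 1012, 1000102, 1001010, 2000010, 2000100, 10000003, 10000020, 10000110,
     10000200, 10001001, 10010000, 11000001, 100000003, 100000110, 101000001, 1000000101,
     1010000000, 10001000000]),
   (10100000,
    [6, 23, 113, 203, 220, 310, 400, 1004, 1021, 10020, 1000004, 1000021, 1000111, 1000201,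
     2000002, 2001000, 3000000, 10000012, 11000010, 100000012, 101000010, 1000000003, 1000000020,
     1000000110, 1001000001, 2000000000, 10000000101, 10010000000, 10100000000]),
   (20000000,
    [1000020, 1000000002, 1001000000, 10000000100]),
   (100000030,
    [7, 24, 114, 131, 221, 1000022, 2000003, 2000110, 10000013, 10000030, 10000103, 10000210,
     10000300, 11000011, 11000101, 110000002, 111000000, 1000000004, 1000000021, 1000000201,
     1002000000, 1010000010, 1010000100, 2000000001, 10000000012, 10000100000, 10001000010,
     10010000001, 10100000001, 20000000000]),
   (110000010,
    [15, 32, 122, 1000013, 1000103, 1000120, 1000210, 1000300, 2000101, 10000021, 10000111,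
     10000201, 11000002, 12000000, 101000002, 102000000, 1000000012, 1001000100, 1010000001,
     10000000003, 10000000020, 10000000110, 10000000200, 10000001001, 10000010000, 11000000000]),
   (200000000,
    [5, 112, 1003, 1200, 10002, 100010, 1000003, 1000110, 1000200, 1001001, 1010000, 10000011,
     100000011, 100000101, 110000000, 1000001000, 1001000000, 10000000010]),
   (1000010000,
    [113, 130, 220, 1000004, 1000111, 1001002, 2000002, 2001000, 10000012, 10001010, 101000010,
     101000100, 110000001, 1000000003, 1000000020, 1000000200, 1000001001, 2000000000]),
   (1000100000,
    [15, 105, 212, 1030, 1000013, 1000103, 1000300, 10000004, 10000021, 10000111, 10000201,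
     10001002, 11001000, 12000000, 100000021, 101000002, 102000000, 110000100, 1000000102,
     1001000010, 10000000003, 10000000020, 10000000110, 10000000200, 10000001001, 10000010000]),
   (1100000000,
    [31, 1000012, 1000102, 2000010, 2000100, 10000003, 10000020, 10000110, 11000001, 1000000011,
     1000000101, 1010000000, 10000000002, 10000001000])]

def rules3 : List (ℕ × List ℕ) :=
  [(3000000,
    [40, 113, 130, 220, 1000111, 1001002, 2000002, 2001000, 10000012, 10001010, 101000010,
     101000100, 110000001, 1000000003, 1000000020, 1000001001, 1000010000, 10100000000]),
   (20000000,
    [1000020, 1000000002, 1001000000, 10000000100]),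
   (200000000,
    [5, 112, 1003, 1200, 10002, 100010, 1000003, 1000110, 1000200, 1001001, 1010000, 10000011,
     100000011, 100000101, 110000000, 1000001000, 1001000000, 10000000010]),
   (2000000000,
    [113, 130, 220, 1000004, 1000111, 1001002, 2000002, 2001000, 10000012, 10001010, 101000010,
     101000100, 110000001, 1000000003, 1000000020, 1000000200, 1000001001, 1000010000]),
   (20000000000,
    [24, 41, 114, 131, 204, 401, 1005, 10021, 1000005, 1000112, 1000202, 1001003, 1001020,
     1100010, 2000003, 2000020, 10000103, 10000120, 10000300, 10010010, 10100001, 11000011,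
     11000101, 100000030, 100000120, 101000011, 101000101, 111000000, 1000000004, 1000000021,
     1000000201, 1000001002, 1000010001, 1001000002, 1002000000, 1010000100, 10000000012,
     10000000102, 10000100000, 10100000001])]

def xmul (l : List ℕ) (a : ℕ) : ℕ := l.foldr (fun k r => Nat.xor (Nat.shiftLeft a k) r) 0
def xpow (l : List ℕ) (e a : ℕ) : ℕ := Nat.rec a (fun _ r => xmul l r) e
def xmon (v : List (List ℕ)) : ℕ → ℕ :=
  List.rec (fun _ => 1) (fun l _ ih k => xpow l (k % 10) (ih (k / 10))) v
def xcomp (v : List (List ℕ)) (g : List ℕ) : ℕ := g.foldr (fun k r => Nat.xor (xmon v k) r) 0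
/-- Kronecker weight of a monomial code -/
def kcode (k : ℕ) : ℕ :=
  k % 10 + 15 * (k / 10 % 10) + 225 * (k / 100 % 10) + 3375 * (k / 1000 % 10)
    + 50625 * (k / 10000 % 10)
def gensL : List (List ℕ) := [c_p1, c_p2, c_ps, c_E4, c_E6, c_E7, c_D4, c_p3, c_g5, c_D6, c_L]
def kgens : List (List ℕ) := gensL.map (fun l => l.map kcode)
def idL : List (List ℕ) := [[1], [15], [225], [3375], [50625], [0]]
def alL : List (List ℕ) := [[1, 225, 0], [15], [225], [3375, 50625], [50625], [0]]
def beL : List (List ℕ) := [[225], [1], [15], [0], [3375], [50625]]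

theorem chk_al : (gensL.all fun l => xcomp alL l == xcomp idL l) = true := by decide +kernel
theorem chk_be : (gensL.all fun l => xcomp beL l == xcomp idL l) = true := by decide +kernel
theorem chk_r1 : (rules2.all fun l => xcomp kgens (l.1 :: l.2) == 0) = true := by decide +kernel
theorem chk_r2 : (rules3.all fun l => xcomp kgens (l.1 :: l.2) == 0) = true := by decide +kernel


section evalsec

abbrev S6 := MvPolynomial (Fin 6) F2

/-- monomial with decimal code `k` evaluated at the list `v` -/
def emon {R : Type*} [CommSemiring R] : List R → ℕ → R
  | [], _ => 1
  | x :: xs, k => x ^ (k % 10) * emon xs (k / 10)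

def epoly {R : Type*} [CommSemiring R] (v : List R) (g : List ℕ) : R := (g.map (emon v)).sum

theorem map_emon {R T : Type*} [CommSemiring R] [CommSemiring T] (φ : R →+* T) (v : List R) (k : ℕ) :
    φ (emon v k) = emon (v.map φ) k := by
  induction v generalizing k with
  | nil => simp [emon]
  | cons x xs ih => simp [emon, ih]

theorem map_epoly {R T : Type*} [CommSemiring R] [CommSemiring T] (φ : R →+* T) (v : List R)
    (g : List ℕ) : φ (epoly v g) = epoly (v.map φ) g := by
  simp [epoly, map_list_sum, List.map_map, Function.comp_def, map_emon]

noncomputable def bp (a : ℕ) : Polynomial F2 :=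
  ∑ i ∈ Finset.range a.size, if a.testBit i then Polynomial.X ^ i else 0

theorem bp_coeff (a i : ℕ) : (bp a).coeff i = if a.testBit i then 1 else 0 := by
  simp only [bp, Polynomial.finsetSum_coeff]
  have : ∀ j, (if a.testBit j then (Polynomial.X ^ j : Polynomial F2) else 0).coeff i
      = if j = i then (if a.testBit i then 1 else 0) else 0 := by
    intro j
    by_cases h : j = i
    · subst h; simp only [if_true]; split_ifs <;> simp
    · split_ifs <;> simp [Polynomial.coeff_X_pow, Ne.symm h, h]
  simp only [this]
  rw [Finset.sum_ite_eq']
  split_ifs with h1 h2 h2 <;> try rfl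
  exfalso
  apply h1
  rw [Finset.mem_range, Nat.lt_size]
  exact Nat.ge_two_pow_of_testBit h2

theorem bp_zero : bp 0 = 0 := by ext i; simp [bp_coeff]
theorem bp_one : bp 1 = 1 := by
  ext i; rw [bp_coeff, Polynomial.coeff_one]
  rcases i with _ | i
  · simp
  · simp [Nat.testBit_succ]
theorem bp_xor (a b : ℕ) : bp (Nat.xor a b) = bp a + bp b := by
  ext i
  rw [Polynomial.coeff_add, bp_coeff, bp_coeff, bp_coeff]
  have : (Nat.xor a b).testBit i = (a.testBit i ^^ b.testBit i) := Nat.testBit_xor ..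
  rw [this]
  cases a.testBit i <;> cases b.testBit i <;> simp
  decide
theorem bp_shl (a k : ℕ) : bp (Nat.shiftLeft a k) = Polynomial.X ^ k * bp a := by
  ext i
  rw [Polynomial.coeff_X_pow_mul', bp_coeff, bp_coeff]
  have : (Nat.shiftLeft a k).testBit i = (decide (i ≥ k) && a.testBit (i - k)) :=
    Nat.testBit_shiftLeft ..
  rw [this]
  by_cases h : k ≤ i <;> simp [h]

noncomputable def lpl (l : List ℕ) : Polynomial F2 := (l.map (fun k => Polynomial.X ^ k)).sum

theorem bp_xmul (l : List ℕ) (a : ℕ) : bp (xmul l a) = lpl l * bp a := by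
  induction l with
  | nil => simp [xmul, lpl, bp_zero]
  | cons x xs ih =>
    have : xmul (x :: xs) a = Nat.xor (Nat.shiftLeft a x) (xmul xs a) := rfl
    rw [this, bp_xor, bp_shl, ih]; simp [lpl, add_mul]

theorem bp_xpow (l : List ℕ) (e a : ℕ) : bp (xpow l e a) = lpl l ^ e * bp a := by
  induction e with
  | zero => simp [xpow]
  | succ n ih =>
    have : xpow l (n+1) a = xmul l (xpow l n a) := rfl
    rw [this, bp_xmul, ih]; ring

theorem bp_xmon (v : List (List ℕ)) (k : ℕ) : bp (xmon v k) = emon (v.map lpl) k := by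
  induction v generalizing k with
  | nil => exact bp_one
  | cons x xs ih =>
    have : xmon (x :: xs) k = xpow x (k % 10) (xmon xs (k / 10)) := rfl
    rw [this, bp_xpow, ih]; rfl

theorem bp_xcomp (v : List (List ℕ)) (g : List ℕ) : bp (xcomp v g) = epoly (v.map lpl) g := by
  induction g with
  | nil => simp [xcomp, epoly, bp_zero]
  | cons x xs ih =>
    have : xcomp v (x :: xs) = Nat.xor (xmon v x) (xcomp v xs) := rfl
    rw [this, bp_xor, ih, bp_xmon]; simp [epoly]

/-- variables -/
noncomputable def Xs : List S6 := [X 0, X 1, X 2, X 3, X 4, X 5]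
noncomputable def gen (l : List ℕ) : S6 := epoly Xs l

def kw : Fin 6 → ℕ := ![1, 15, 225, 3375, 50625, 0]
theorem kw0 : kw 0 = 1 := rfl
theorem kw1 : kw 1 = 15 := rfl
theorem kw2 : kw 2 = 225 := rfl
theorem kw3 : kw 3 = 3375 := rfl
theorem kw4 : kw 4 = 50625 := rfl
theorem kw5 : kw 5 = 0 := rfl

noncomputable def kap : S6 →ₐ[F2] Polynomial F2 :=
  aeval (fun i => Polynomial.X ^ kw i)

theorem kap_X (i : Fin 6) : kap (X i) = Polynomial.X ^ (kw i) := aeval_X _ _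

theorem kap_monomial (m : Fin 6 →₀ ℕ) (r : F2) :
    kap (monomial m r) = Polynomial.C r * Polynomial.X ^ (∑ i, m i * kw i) := by
  rw [kap, aeval_monomial]
  congr 1
  rw [Finsupp.prod_fintype _ _ (by simp), ← Finset.prod_pow_eq_pow_sum]
  apply Finset.prod_congr rfl
  intro i _
  rw [mul_comm, pow_mul]

theorem lpl1 (k : ℕ) : lpl [k] = Polynomial.X ^ k := by simp [lpl]
theorem lpl2 (k l : ℕ) : lpl [k, l] = Polynomial.X ^ k + Polynomial.X ^ l := by simp [lpl]
theorem lpl3 (k l m : ℕ) : lpl [k, l, m] = Polynomial.X ^ k + Polynomial.X ^ l + Polynomial.X ^ m := by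
  simp [lpl, add_assoc]

theorem kw_inj (n : ℕ) (hn : n ≤ 14) (m m' : Fin 6 →₀ ℕ) (h : ∑ i, m i = n) (h' : ∑ i, m' i = n)
    (hk : ∑ i, m i * kw i = ∑ i, m' i * kw i) : m = m' := by
  simp only [Fin.sum_univ_six, kw] at h h' hk
  simp at hk
  have key : ∀ a0 a1 a2 a3 a4 a5 b0 b1 b2 b3 b4 b5 : ℕ, a0 + a1 + a2 + a3 + a4 + a5 = n →
      b0 + b1 + b2 + b3 + b4 + b5 = n →
      a0 + a1 * 15 + a2 * 225 + a3 * 3375 + a4 * 50625 =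
      b0 + b1 * 15 + b2 * 225 + b3 * 3375 + b4 * 50625 →
      a0 = b0 ∧ a1 = b1 ∧ a2 = b2 ∧ a3 = b3 ∧ a4 = b4 ∧ a5 = b5 := by
    intro a0 a1 a2 a3 a4 a5 b0 b1 b2 b3 b4 b5 h h' hk
    have st : ∀ x y u v : ℕ, x ≤ 14 → y ≤ 14 → x + u * 15 = y + v * 15 → x = y ∧ u = v := by
      intros; omega
    obtain ⟨e0, k1⟩ := st a0 b0 (a1 + 15 * (a2 + 15 * (a3 + 15 * a4)))
      (b1 + 15 * (b2 + 15 * (b3 + 15 * b4))) (by omega) (by omega) (by linarith)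
    obtain ⟨e1, k2⟩ := st a1 b1 (a2 + 15 * (a3 + 15 * a4))
      (b2 + 15 * (b3 + 15 * b4)) (by omega) (by omega) (by linarith)
    obtain ⟨e2, k3⟩ := st a2 b2 (a3 + 15 * a4)
      (b3 + 15 * b4) (by omega) (by omega) (by linarith)
    obtain ⟨e3, k4⟩ := st a3 b3 a4 b4 (by omega) (by omega) (by linarith)
    refine ⟨e0, e1, e2, e3, k4, by omega⟩
  obtain ⟨e0, e1, e2, e3, e4, e5⟩ := key _ _ _ _ _ _ _ _ _ _ _ _ h h' hk
  ext i
  fin_cases i <;> assumption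

theorem kap_inj (n : ℕ) (hn : n ≤ 14) (p : S6) (hp : p.IsHomogeneous n) (h : kap p = 0) : p = 0 := by
  ext m
  rw [coeff_zero]
  by_contra hm
  have hm' : m ∈ p.support := mem_support_iff.mpr hm
  have hdeg : ∀ m' ∈ p.support, ∑ i, m' i = n := by
    intro m' h1
    have := hp (mem_support_iff.mp h1)
    rw [Finsupp.weight_apply, Finsupp.sum_fintype _ _ (by simp)] at this
    simpa using this
  have e : kap p = ∑ m' ∈ p.support, kap (monomial m' (coeff m' p)) := by
    conv_lhs => rw [p.as_sum]
    rw [map_sum]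
  have := congrArg (fun q => Polynomial.coeff q (∑ i, m i * kw i)) h
  simp only [e, Polynomial.finsetSum_coeff, kap_monomial, Polynomial.coeff_C_mul_X_pow,
    Polynomial.coeff_zero] at this
  rw [Finset.sum_eq_single m] at this
  · simp at this; exact hm this
  · intro b hb hbm
    rw [if_neg]
    intro hh
    exact hbm (kw_inj n hn b m (hdeg b hb) (hdeg m hm') hh.symm)
  · intro h; exact absurd hm' h

def hdeg : List ℕ → ℕ → ℕ
  | [], _ => 0
  | d :: ds, k => d * (k % 10) + hdeg ds (k / 10)

theorem emon_hom (v : List S6) (ds : List ℕ) (h : List.Forall₂ (fun p d => p.IsHomogeneous d) v ds)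
    (k : ℕ) : (emon v k).IsHomogeneous (hdeg ds k) := by
  induction h generalizing k with
  | nil => exact isHomogeneous_one _ _
  | cons h1 _ ih => exact (h1.pow _).mul (ih _)

theorem epoly_hom (v : List S6) (ds : List ℕ) (h : List.Forall₂ (fun p d => p.IsHomogeneous d) v ds)
    (g : List ℕ) (n : ℕ) (hg : g.all (fun k => hdeg ds k == n) = true) :
    (epoly v g).IsHomogeneous n := by
  induction g with
  | nil => exact isHomogeneous_zero _ _ _
  | cons x xs ih =>
    simp only [List.all_cons, Bool.and_eq_true, beq_iff_eq] at hg
    have : epoly v (x :: xs) = emon v x + epoly v xs := by simp [epoly]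
    rw [this]
    exact (hg.1 ▸ emon_hom v ds h x).add (ih hg.2)

theorem Xs_hom : List.Forall₂ (fun (p : S6) d => p.IsHomogeneous d) Xs [1,1,1,1,1,1] := by
  simp [Xs, isHomogeneous_X]

theorem kap_Xs : Xs.map kap = idL.map lpl := by
  simp only [Xs, idL, List.map_cons, List.map_nil, lpl1, kap_X, kw0, kw1, kw2, kw3, kw4, kw5]

theorem kap_gen (l : List ℕ) : kap (gen l) = bp (xcomp idL l) := by
  have := map_epoly (kap : S6 →+* Polynomial F2) Xs l
  rw [bp_xcomp, ← kap_Xs]; exact this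

theorem kap_gen' (l : List ℕ) : kap (gen l) = lpl (l.map kcode) := by
  have := map_epoly (kap : S6 →+* Polynomial F2) Xs l
  refine this.trans ?_
  have h2 : Xs.map (kap : S6 →+* Polynomial F2) = idL.map lpl := kap_Xs
  rw [h2, epoly, lpl, List.map_map]
  congr 1
  apply List.map_congr_left
  intro k _
  simp only [idL, lpl1, List.map_cons, List.map_nil, emon, Function.comp, kcode, ← pow_mul, ← pow_add,
    Nat.div_div_eq_div_mul, Nat.reduceMul, mul_one]
  congr 1
  ring

/-- degrees of the generators -/
def gdeg : List ℕ := [2, 3, 3, 4, 6, 7, 4, 5, 5, 6, 7]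
noncomputable def gens : List S6 := gensL.map gen

theorem chk_gdeg : List.Forall₂ (fun l n => (l.all (fun k => hdeg [1,1,1,1,1,1] k == n)) = true)
    gensL gdeg := by
  simp only [gensL, gdeg, List.forall₂_cons, List.Forall₂.nil, and_true]
  decide +kernel

theorem gens_hom : List.Forall₂ (fun (p : S6) d => p.IsHomogeneous d) gens gdeg := by
  rw [gens, List.forall₂_map_left_iff]
  exact chk_gdeg.imp (fun l n h => epoly_hom _ _ Xs_hom _ _ h)

theorem rel_of_check (l : List ℕ) (n : ℕ) (hn : n ≤ 14)
    (h1 : l.all (fun k => hdeg gdeg k == n) = true) (h2 : xcomp kgens l = 0) :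
    epoly gens l = 0 := by
  apply kap_inj n hn _ (epoly_hom _ _ gens_hom _ _ h1)
  have := map_epoly (kap : S6 →+* Polynomial F2) gens l
  refine this.trans ?_
  have h3 : gens.map (kap : S6 →+* Polynomial F2) = kgens.map lpl := by
    rw [gens, kgens, List.map_map, List.map_map]
    apply List.map_congr_left
    intro a _
    exact kap_gen' a
  rw [h3, ← bp_xcomp, h2, bp_zero]

theorem chk_rdeg : ((rules2 ++ rules3).all fun r => (r.1 :: r.2).all (fun k =>
    hdeg gdeg k == hdeg gdeg r.1) && decide (hdeg gdeg r.1 ≤ 14)) = true := by decide +kernel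

theorem rules_valid (r : ℕ × List ℕ) (hr : r ∈ rules2 ++ rules3) :
    emon gens r.1 = epoly gens r.2 := by
  have h0 : xcomp kgens (r.1 :: r.2) = 0 := by
    rcases List.mem_append.mp hr with h | h
    · simpa using (List.all_eq_true.mp chk_r1) r h
    · simpa using (List.all_eq_true.mp chk_r2) r h
  have h1 := (List.all_eq_true.mp chk_rdeg) r hr
  rw [Bool.and_eq_true] at h1
  have := rel_of_check (r.1 :: r.2) _ (of_decide_eq_true h1.2) h1.1 h0
  have h3 : epoly gens (r.1 :: r.2) = emon gens r.1 + epoly gens r.2 := by simp [epoly]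
  rw [h3] at this
  exact CharTwo.add_eq_zero.mp this

/-- the two substitutions -/
noncomputable def alV : Fin 6 → S6 := ![X 0 + X 2 + X 5, X 1, X 2, X 3 + X 4, X 4, X 5]
noncomputable def beV : Fin 6 → S6 := ![X 2, X 0, X 1, X 5, X 3, X 4]
theorem al0 : alV 0 = X 0 + X 2 + X 5 := rfl
theorem al1 : alV 1 = X 1 := rfl
theorem al2 : alV 2 = X 2 := rfl
theorem al3 : alV 3 = X 3 + X 4 := rfl
theorem al4 : alV 4 = X 4 := rfl
theorem al5 : alV 5 = X 5 := rfl
theorem be0 : beV 0 = X 2 := rfl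
theorem be1 : beV 1 = X 0 := rfl
theorem be2 : beV 2 = X 1 := rfl
theorem be3 : beV 3 = X 5 := rfl
theorem be4 : beV 4 = X 3 := rfl
theorem be5 : beV 5 = X 4 := rfl
noncomputable def alH : S6 →ₐ[F2] S6 := aeval alV
noncomputable def beH : S6 →ₐ[F2] S6 := aeval beV

theorem inv_of_check (φ : S6 →ₐ[F2] S6) (fl : List (List ℕ))
    (hφ : List.Forall₂ (fun (p : S6) d => p.IsHomogeneous d) (Xs.map φ) [1,1,1,1,1,1])
    (hk : (Xs.map φ).map kap = fl.map lpl)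
    (hc : (gensL.all fun l => xcomp fl l == xcomp idL l) = true) (p : S6) (hp : p ∈ gens) :
    φ p = p := by
  obtain ⟨l, hl, rfl⟩ := List.mem_map.mp hp
  have hl2 : ∃ n ≤ 14, (l.all (fun k => hdeg [1,1,1,1,1,1] k == n)) = true := by
    have : gensL.all (fun l => (List.range 15).any fun n =>
      (l.all (fun k => hdeg [1,1,1,1,1,1] k == n))) = true := by decide +kernel
    have := (List.all_eq_true.mp this) l hl
    obtain ⟨n, hn, h⟩ := List.any_eq_true.mp this
    exact ⟨n, by have := List.mem_range.mp hn; omega, h⟩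
  obtain ⟨n, hn, hd⟩ := hl2
  have e := map_epoly (φ : S6 →+* S6) Xs l
  have e' : φ (gen l) = epoly (Xs.map φ) l := e
  rw [← sub_eq_zero]
  apply kap_inj n hn
  · rw [e']
    exact (epoly_hom _ _ hφ _ _ hd).sub (epoly_hom _ _ Xs_hom _ _ hd)
  · rw [map_sub, e', kap_gen]
    have e2 := map_epoly (kap : S6 →+* Polynomial F2) (Xs.map φ) l
    have e3 : kap (epoly (Xs.map φ) l) = epoly (fl.map lpl) l := by
      rw [← hk]; exact e2
    rw [e3, ← bp_xcomp]
    have := (List.all_eq_true.mp hc) l hl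
    rw [beq_iff_eq] at this
    rw [this, sub_self]

theorem gens_al (p : S6) (hp : p ∈ gens) : alH p = p := by
  apply inv_of_check alH alL _ _ chk_al p hp
  · simp only [Xs, alH, List.map_cons, List.map_nil, aeval_X, al0, al1, al2, al3, al4, al5]
    simp [isHomogeneous_X, IsHomogeneous.add]
  · simp only [Xs, alL, List.map_cons, List.map_nil, lpl1, lpl2, lpl3, alH, aeval_X, al0, al1, al2, al3, al4, al5,
      map_add, kap_X, kw0, kw1, kw2, kw3, kw4, kw5]

theorem gens_be (p : S6) (hp : p ∈ gens) : beH p = p := by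
  apply inv_of_check beH beL _ _ chk_be p hp
  · simp only [Xs, beH, List.map_cons, List.map_nil, aeval_X, be0, be1, be2, be3, be4, be5]
    simp [isHomogeneous_X]
  · simp only [Xs, beL, List.map_cons, List.map_nil, lpl1, beH, aeval_X, be0, be1, be2, be3, be4, be5,
      kap_X, kw0, kw1, kw2, kw3, kw4, kw5]

end evalsec


section grp

theorem gen_top : Subgroup.closure ({Agen, Bgen} : Set G3) = ⊤ := by
  set H := Subgroup.closure ({Agen, Bgen} : Set G3) with hH
  have hA : Agen ∈ H := Subgroup.subset_closure (by simp)
  have hB : Bgen ∈ H := Subgroup.subset_closure (by simp)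
  have hBi : Bgen⁻¹ ∈ H := H.inv_mem hB
  have h02 := hA
  have h10 : Bgen * Agen * Bgen⁻¹ ∈ H := H.mul_mem (H.mul_mem hB hA) hBi
  have h21 : Bgen * (Bgen * Agen * Bgen⁻¹) * Bgen⁻¹ ∈ H := H.mul_mem (H.mul_mem hB h10) hBi
  have hc : ∀ x y, x ∈ H → y ∈ H → x * y * x * y ∈ H := fun x y hx hy =>
    H.mul_mem (H.mul_mem (H.mul_mem hx hy) hx) hy
  have h01 := hc _ _ h02 h21
  have h12 := hc _ _ h10 h02
  have h20 := hc _ _ h21 h10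
  have key : ∀ M : Matrix (Fin 3) (Fin 3) F2, M.det ≠ 0 → ∃ g ∈ H, (g : Matrix (Fin 3) (Fin 3) F2) = M := by
    intro M hM
    refine Matrix.diagonal_transvection_induction_of_det_ne_zero
      (fun M => ∃ g ∈ H, (g : Matrix (Fin 3) (Fin 3) F2) = M) M hM ?_ ?_ ?_
    · intro D hD
      refine ⟨1, H.one_mem, ?_⟩
      rw [Matrix.det_diagonal] at hD
      have : D = 1 := by
        ext i
        have h1 : D i ≠ 0 := fun h => hD (Finset.prod_eq_zero (Finset.mem_univ i) h)
        have : ∀ x : F2, x ≠ 0 → x = 1 := by decide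
        rw [this _ h1]; rfl
      rw [this]; exact Matrix.diagonal_one.symm
    · rintro ⟨i, j, hij, c⟩
      have : ∀ x : F2, x = 0 ∨ x = 1 := by decide
      rcases this c with rfl | rfl
      · exact ⟨1, H.one_mem, by simp [Matrix.TransvectionStruct.toMatrix]⟩
      · have e02 : ((Agen : G3) : Matrix (Fin 3) (Fin 3) F2) = Matrix.transvection 0 2 1 := by decide +kernel
        have e10 : ((Bgen * Agen * Bgen⁻¹ : G3) : Matrix (Fin 3) (Fin 3) F2) = Matrix.transvection 1 0 1 := by decide +kernel
        have e21 : ((Bgen * (Bgen * Agen * Bgen⁻¹) * Bgen⁻¹ : G3) : Matrix (Fin 3) (Fin 3) F2) = Matrix.transvection 2 1 1 := by decide +kernel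
        have f01 : (Matrix.transvection 0 2 1 * Matrix.transvection 2 1 1 * Matrix.transvection 0 2 1 * Matrix.transvection 2 1 1 : Matrix (Fin 3) (Fin 3) F2) = Matrix.transvection 0 1 1 := by decide +kernel
        have f12 : (Matrix.transvection 1 0 1 * Matrix.transvection 0 2 1 * Matrix.transvection 1 0 1 * Matrix.transvection 0 2 1 : Matrix (Fin 3) (Fin 3) F2) = Matrix.transvection 1 2 1 := by decide +kernel
        have f20 : (Matrix.transvection 2 1 1 * Matrix.transvection 1 0 1 * Matrix.transvection 2 1 1 * Matrix.transvection 1 0 1 : Matrix (Fin 3) (Fin 3) F2) = Matrix.transvection 2 0 1 := by decide +kernel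
        fin_cases i <;> fin_cases j <;> first | exact absurd rfl hij | skip
        · exact ⟨_, h01, by rw [Units.val_mul, Units.val_mul, Units.val_mul, e02, e21]; exact f01⟩
        · exact ⟨_, h02, e02⟩
        · exact ⟨_, h10, e10⟩
        · exact ⟨_, h12, by rw [Units.val_mul, Units.val_mul, Units.val_mul, e10, e02]; exact f12⟩
        · exact ⟨_, h20, by rw [Units.val_mul, Units.val_mul, Units.val_mul, e21, e10]; exact f20⟩
        · exact ⟨_, h21, e21⟩
    · rintro A B _ _ ⟨g, hg, rfl⟩ ⟨g', hg', rfl⟩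
      exact ⟨g * g', H.mul_mem hg hg', rfl⟩
  rw [eq_top_iff]
  intro g _
  obtain ⟨g', h, e⟩ := key g (by
    have := (Matrix.isUnit_iff_isUnit_det _).mp g.isUnit
    exact this.ne_zero)
  rwa [← Units.ext e]

variable (D : G3 →* GL (Fin 6) F2)

theorem polyAct_X (σ : G3) (i : Fin 6) :
    polyAct D σ (X i) = ∑ j, (D σ : Matrix (Fin 6) (Fin 6) F2) i j • X j := by
  simp [polyAct]

theorem polyAct_mul (σ τ : G3) (p : S6) : polyAct D (σ * τ) p = polyAct D τ (polyAct D σ p) := by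
  rw [← AlgHom.comp_apply]
  congr 1
  apply MvPolynomial.algHom_ext
  intro i
  rw [AlgHom.comp_apply, polyAct_X, polyAct_X, map_sum]
  simp only [map_smul, polyAct_X, Finset.smul_sum, smul_smul]
  rw [Finset.sum_comm]
  apply Finset.sum_congr rfl
  intro j _
  rw [← Finset.sum_smul, map_mul]
  rfl

theorem polyAct_one (p : S6) : polyAct D 1 p = p := by
  have : polyAct D 1 = AlgHom.id F2 S6 := by
    apply MvPolynomial.algHom_ext
    intro i
    rw [polyAct_X, map_one]
    simp [Matrix.one_apply]
  rw [this]; rfl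

theorem polyAct_A (hA : (D Agen : Matrix (Fin 6) (Fin 6) F2) = DA6) : polyAct D Agen = alH := by
  apply MvPolynomial.algHom_ext
  intro i
  rw [polyAct_X, hA, alH, aeval_X]
  fin_cases i <;> simp [Fin.sum_univ_six, DA6, alV]

theorem polyAct_B (hB : (D Bgen : Matrix (Fin 6) (Fin 6) F2) = DB6) : polyAct D Bgen = beH := by
  apply MvPolynomial.algHom_ext
  intro i
  rw [polyAct_X, hB, beH, aeval_X]
  fin_cases i <;> simp [Fin.sum_univ_six, DB6, beV]

theorem mem_invG (hA : (D Agen : Matrix (Fin 6) (Fin 6) F2) = DA6)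
    (hB : (D Bgen : Matrix (Fin 6) (Fin 6) F2) = DB6) (p : S6) :
    p ∈ invG D ↔ alH p = p ∧ beH p = p := by
  constructor
  · intro h
    exact ⟨polyAct_A D hA ▸ h Agen trivial, polyAct_B D hB ▸ h Bgen trivial⟩
  · rintro ⟨h1, h2⟩ σ _
    have hσ : σ ∈ Subgroup.closure ({Agen, Bgen} : Set G3) := gen_top ▸ Subgroup.mem_top σ
    induction hσ using Subgroup.closure_induction with
    | mem x hx =>
      rcases hx with rfl | rfl
      · rw [polyAct_A D hA, h1]
      · rw [polyAct_B D hB, h2]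
    | one => exact polyAct_one D p
    | mul x y _ _ hx hy => rw [polyAct_mul, hx trivial, hy trivial]
    | inv x _ hx =>
      have := polyAct_mul D x x⁻¹ p
      rw [mul_inv_cancel, polyAct_one, hx trivial] at this
      exact this.symm

end grp


section step1

noncomputable def act : List Bool → (S6 →ₐ[F2] S6)
  | [] => AlgHom.id F2 S6
  | true :: w => alH.comp (act w)
  | false :: w => beH.comp (act w)

theorem act_fix (w : List Bool) (u : S6) (h1 : alH u = u) (h2 : beH u = u) : act w u = u := by
  induction w with
  | nil => rfl
  | cons b w ih => cases b <;> simp [act, ih, h1, h2]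

theorem alX3 : alH (X 3) = X 3 + X 4 := aeval_X _ _
theorem alX4 : alH (X 4) = X 4 := aeval_X _ _
theorem alX5 : alH (X 5) = X 5 := aeval_X _ _
theorem beX3 : beH (X 3) = X 5 := aeval_X _ _
theorem beX4 : beH (X 4) = X 3 := aeval_X _ _
theorem beX5 : beH (X 5) = X 4 := aeval_X _ _

/-- the root counting lemma -/
theorem root_count (T : Set S6) (n : ℕ) (x v : S6) (c : Fin n → S6)
    (hc : ∀ i, c i ∈ Algebra.adjoin F2 T)
    (hx : x ^ n + ∑ i, c i * x ^ (i : ℕ) = 0)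
    (hv : v ∈ Algebra.adjoin F2 (T ∪ {x}))
    (φ : Fin n → (S6 →ₐ[F2] S6)) (hφT : ∀ i, ∀ t ∈ T, φ i t = t) (hφv : ∀ i, φ i v = v)
    (hinj : Function.Injective (fun i => φ i x)) :
    v ∈ Algebra.adjoin F2 T := by
  set C := Algebra.adjoin F2 T with hC
  rw [Algebra.adjoin_union_eq_adjoin_adjoin] at hv
  have hv' : v ∈ Algebra.adjoin C {x} := hv
  rw [Algebra.adjoin_singleton_eq_range_aeval] at hv'
  obtain ⟨Q, hQ⟩ := hv'
  have hQ : Polynomial.aeval x Q = v := hQ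
  rcases Nat.eq_zero_or_pos n with hn | hn
  · subst hn; simp at hx
  let M : Polynomial C := Polynomial.X ^ n + ∑ i : Fin n, Polynomial.C ⟨c i, hc i⟩ * Polynomial.X ^ (i : ℕ)
  have hdeg : (∑ i : Fin n, Polynomial.C (⟨c i, hc i⟩ : C) * Polynomial.X ^ (i : ℕ)).degree < (n : WithBot ℕ) :=
    Polynomial.degree_sum_fin_lt _
  have hM : M.Monic := Polynomial.monic_X_pow_add hdeg
  have hMd : M.natDegree = n := by
    apply Polynomial.natDegree_eq_of_degree_eq_some
    rw [Polynomial.degree_add_eq_left_of_degree_lt] <;> rw [Polynomial.degree_X_pow]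
    exact hdeg
  have hM0 : Polynomial.aeval x M = 0 := by
    simp only [M, map_add, map_pow, Polynomial.aeval_X, map_sum, map_mul, Polynomial.aeval_C]
    exact hx
  let P := Q %ₘ M
  have hP : Polynomial.aeval x P = v := by
    rw [← hQ]
    conv_rhs => rw [← Polynomial.modByMonic_add_div Q M]
    rw [map_add, map_mul, hM0, zero_mul, add_zero]
  have hPd : P.natDegree < n := by
    rw [← hMd]
    apply Polynomial.natDegree_modByMonic_lt _ hM
    intro h
    rw [h, Polynomial.natDegree_one] at hMd
    omega
  let P' := P.map (algebraMap C S6)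
  have hfixC : ∀ i, ∀ y : C, φ i y = y := by
    intro i y
    have : C ≤ AlgHom.equalizer (φ i) (AlgHom.id F2 S6) := by
      apply Algebra.adjoin_le
      intro t ht
      exact hφT i t ht
    exact this y.2
  have hev : ∀ i, P'.eval (φ i x) = v := by
    intro i
    rw [← hφv i, ← hP, Polynomial.aeval_def]
    refine Eq.trans ?_ (Polynomial.hom_eval₂ P _ (φ i : S6 →+* S6) x).symm
    rw [Polynomial.eval_map]
    congr 1
    ext y
    exact (congrArg _ (hfixC i y)).symm
  have hz : P' - Polynomial.C v = 0 := by
    apply Polynomial.eq_zero_of_natDegree_lt_card_of_eval_eq_zero _ hinj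
    · intro i; rw [Polynomial.eval_sub, hev, Polynomial.eval_C, sub_self]
    · rw [Fintype.card_fin, Polynomial.natDegree_sub_C]
      exact lt_of_le_of_lt Polynomial.natDegree_map_le hPd
  have : v = P'.coeff 0 := by
    rw [sub_eq_zero] at hz
    rw [hz, Polynomial.coeff_C_zero]
  rw [this, Polynomial.coeff_map]
  exact (P.coeff 0).2

noncomputable def lf (v : Fin 3 → F2) : S6 := C (v 0) * X 3 + C (v 1) * X 4 + C (v 2) * X 5

theorem lf_inj : Function.Injective lf := by
  intro v w h
  have h0 := congrArg (coeff (Finsupp.single 3 1)) h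
  have h1 := congrArg (coeff (Finsupp.single 4 1)) h
  have h2 := congrArg (coeff (Finsupp.single 5 1)) h
  simp [lf, coeff_C_mul, coeff_X', Finsupp.single_left_inj] at h0 h1 h2
  ext i
  fin_cases i <;> simp [h0, h1, h2]

noncomputable abbrev gp1 : S6 := gen c_p1
noncomputable abbrev gp2 : S6 := gen c_p2
noncomputable abbrev gp3 : S6 := gen c_p3
noncomputable abbrev gD4 : S6 := gen c_D4
noncomputable abbrev gD6 : S6 := gen c_D6
noncomputable abbrev gL : S6 := gen c_L

theorem p1_eq : gp1 = X 4 * X 0 + X 5 * X 1 + X 3 * X 2 + (X 3^2 + X 3*X 4 + X 4^2+X 3*X 5+X 4*X 5+X 5^2) := by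
  simp [gen, epoly, Xs, emon, c_p1]; ring
theorem p2_eq : gp2 = X 4^2 * X 0 + X 5^2 * X 1 + X 3^2 * X 2 + X 3*X 4*X 5 := by
  simp [gen, epoly, Xs, emon, c_p2]; ring
theorem p3_eq : gp3 = X 4^4 * X 0 + X 5^4 * X 1 + X 3^4 * X 2 + X 3*X 4*X 5*(X 4*X 5+X 3*X 5+X 3*X 4) := by
  simp [gen, epoly, Xs, emon, c_p3]; ring
theorem L_eq : gL = X 3*X 4^2*X 5^4+X 3*X 4^4*X 5^2+X 3^2*X 4*X 5^4+X 3^2*X 4^4*X 5+X 3^4*X 4*X 5^2+X 3^4*X 4^2*X 5 := by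
  simp [gen, epoly, Xs, emon, c_L]; ring
theorem D4_eq : gD4 = (X 3^2+X 3*X 4+X 4^2)^2 + X 5^4 + (X 3^2+X 3*X 4+X 4^2)*X 5^2 + X 3*X 4*(X 3+X 4)*X 5 := by
  simp [gen, epoly, Xs, emon, c_D4]; grind
theorem D6_eq : gD6 = (X 3*X 4*(X 3+X 4))^2 + (X 5^4 + (X 3^2+X 3*X 4+X 4^2)*X 5^2 + X 3*X 4*(X 3+X 4)*X 5)*(X 3^2+X 3*X 4+X 4^2) := by
  simp [gen, epoly, Xs, emon, c_D6]; grind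

def Qset : Set S6 := {gD4, gD6, gL, gp1, gp2, gp3}

theorem Qset_fix (w : List Bool) (t : S6) (ht : t ∈ Qset) : act w t = t := by
  have : t ∈ gens := by
    simp only [Qset, Set.mem_insert_iff, Set.mem_singleton_iff] at ht
    simp only [gens, gensL, List.map_cons, List.map_nil, List.mem_cons]
    rcases ht with rfl | rfl | rfl | rfl | rfl | rfl <;> simp
  exact act_fix w t (gens_al t this) (gens_be t this)

theorem cramer (u : S6) : ∃ k, gL ^ k * u ∈ Algebra.adjoin F2 (Qset ∪ {X 3} ∪ {X 4} ∪ {X 5}) := by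
  set C := Algebra.adjoin F2 (Qset ∪ {X 3} ∪ {X 4} ∪ {X 5} : Set S6) with hC
  have hs : ∀ t ∈ (Qset ∪ {X 3} ∪ {X 4} ∪ {X 5} : Set S6), t ∈ C := fun t ht => Algebra.subset_adjoin ht
  have hL : gL ∈ C := hs _ (by simp [Qset])
  have h1 : gp1 ∈ C := hs _ (by simp [Qset])
  have h2 : gp2 ∈ C := hs _ (by simp [Qset])
  have h3 : gp3 ∈ C := hs _ (by simp [Qset])
  have hd : (X 3 : S6) ∈ C := hs _ (by simp)
  have he : (X 4 : S6) ∈ C := hs _ (by simp)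
  have hf : (X 5 : S6) ∈ C := hs _ (by simp)
  let d : C := ⟨X 3, hd⟩
  let e : C := ⟨X 4, he⟩
  let f : C := ⟨X 5, hf⟩
  let q1 : C := ⟨gp1, h1⟩ + (d^2+d*e+e^2+d*f+e*f+f^2)
  let q2 : C := ⟨gp2, h2⟩ + d*e*f
  let q3 : C := ⟨gp3, h3⟩ + d*e*f*(e*f+d*f+d*e)
  have ha : gL * X 0 ∈ C := by
    have : gL * X 0 = (((f^2*d^4+f^4*d^2)*q1 + (f*d^4+f^4*d)*q2 + (f*d^2+f^2*d)*q3 : C) : S6) := by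
      simp only [q1, q2, q3, Subalgebra.coe_add, Subalgebra.coe_mul, Subalgebra.coe_pow, d, e, f]
      rw [p1_eq, p2_eq, p3_eq, L_eq]
      grind
    rw [this]; exact Subtype.property _
  have hb : gL * X 1 ∈ C := by
    have : gL * X 1 = (((e^2*d^4+e^4*d^2)*q1 + (e*d^4+e^4*d)*q2 + (e*d^2+e^2*d)*q3 : C) : S6) := by
      simp only [q1, q2, q3, Subalgebra.coe_add, Subalgebra.coe_mul, Subalgebra.coe_pow, d, e, f]
      rw [p1_eq, p2_eq, p3_eq, L_eq]
      grind
    rw [this]; exact Subtype.property _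
  have hc : gL * X 2 ∈ C := by
    have : gL * X 2 = (((f^2*e^4+f^4*e^2)*q1 + (f*e^4+f^4*e)*q2 + (f*e^2+f^2*e)*q3 : C) : S6) := by
      simp only [q1, q2, q3, Subalgebra.coe_add, Subalgebra.coe_mul, Subalgebra.coe_pow, d, e, f]
      rw [p1_eq, p2_eq, p3_eq, L_eq]
      grind
    rw [this]; exact Subtype.property _
  have hX : ∀ i : Fin 6, gL * X i ∈ C := by
    intro i
    fin_cases i
    · exact ha
    · exact hb
    · exact hc
    · exact C.mul_mem hL hd
    · exact C.mul_mem hL he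
    · exact C.mul_mem hL hf
  induction u using MvPolynomial.induction_on with
  | C r => exact ⟨0, by rw [pow_zero, one_mul]; exact C.algebraMap_mem r⟩
  | add p q hp hq =>
    obtain ⟨k, hk⟩ := hp
    obtain ⟨l, hl⟩ := hq
    refine ⟨k + l, ?_⟩
    have : gL ^ (k + l) * (p + q) = gL ^ l * (gL ^ k * p) + gL ^ k * (gL ^ l * q) := by ring
    rw [this]
    exact C.add_mem (C.mul_mem (C.pow_mem hL _) hk) (C.mul_mem (C.pow_mem hL _) hl)
  | mul_X p i hp =>
    obtain ⟨k, hk⟩ := hp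
    refine ⟨k + 1, ?_⟩
    have : gL ^ (k + 1) * (p * X i) = gL ^ k * p * (gL * X i) := by ring
    rw [this]
    exact C.mul_mem hk (hX i)

def wf : Fin 4 → List Bool := ![[], [false, true, false, false],
  [false, true, false, false, true, false, true, false, false, true],
  [true, false, true, false, false, true]]
def vf : Fin 4 → Fin 3 → F2 := ![![0,0,1], ![1,0,1], ![0,1,1], ![1,1,1]]
def we : Fin 6 → List Bool := ![[], [false, false, true, false, false, true, false, true, false],
  [true, false, true, false, true, false, false, true, false, true],
  [true, false, false, true, false, true, false, true],
  [false, false, true, false], [false, true, false, true, false]]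
def ve : Fin 6 → Fin 3 → F2 := ![![0,1,0], ![1,1,0], ![0,0,1], ![1,0,1], ![0,1,1], ![1,1,1]]
def wd : Fin 7 → List Bool := ![[], [false, false], [true], [false], [false, true],
  [false, false, true], [true, false, true]]
def vd : Fin 7 → Fin 3 → F2 := ![![1,0,0], ![0,1,0], ![1,1,0], ![0,0,1], ![1,0,1], ![0,1,1], ![1,1,1]]

theorem wf_act (i : Fin 4) : act (wf i) (X 5) = lf (vf i) ∧ act (wf i) (X 3) = X 3 ∧ act (wf i) (X 4) = X 4 := by
  fin_cases i <;> simp [wf, vf, act, lf, alX3, alX4, alX5, beX3, beX4, beX5] <;> grind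
theorem we_act (i : Fin 6) : act (we i) (X 4) = lf (ve i) ∧ act (we i) (X 3) = X 3 := by
  fin_cases i <;> simp [we, ve, act, lf, alX3, alX4, alX5, beX3, beX4, beX5] <;> grind
theorem wd_act (i : Fin 7) : act (wd i) (X 3) = lf (vd i) := by
  fin_cases i <;> simp [wd, vd, act, lf, alX3, alX4, alX5, beX3, beX4, beX5] <;> grind

theorem step1 (u : S6) (h1 : alH u = u) (h2 : beH u = u) : ∃ k, gL ^ k * u ∈ Algebra.adjoin F2 Qset := by
  obtain ⟨k, hk⟩ := cramer u
  refine ⟨k, ?_⟩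
  set v := gL ^ k * u with hv
  have hLQ : gL ∈ Qset := by simp [Qset]
  have hfv : ∀ w, act w v = v := fun w => by
    rw [hv, map_mul, map_pow, Qset_fix w _ hLQ, act_fix w u h1 h2]
  have k1 : v ∈ Algebra.adjoin F2 (Qset ∪ {X 3} ∪ {X 4}) := by
    set C := Algebra.adjoin F2 (Qset ∪ {X 3} ∪ {X 4} : Set S6) with hC
    have hs : ∀ t ∈ (Qset ∪ {X 3} ∪ {X 4} : Set S6), t ∈ C := fun t ht => Algebra.subset_adjoin ht
    have hd : (X 3 : S6) ∈ C := hs _ (by simp)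
    have he : (X 4 : S6) ∈ C := hs _ (by simp)
    have h4 : gD4 ∈ C := hs _ (by simp [Qset])
    have hA : (X 3^2 + X 3 * X 4 + X 4^2 : S6) ∈ C :=
      C.add_mem (C.add_mem (C.pow_mem hd _) (C.mul_mem hd he)) (C.pow_mem he _)
    refine root_count _ 4 (X 5) v ![gD4 + (X 3^2 + X 3 * X 4 + X 4^2)^2, X 3 * X 4 * (X 3 + X 4),
      X 3^2 + X 3 * X 4 + X 4^2, 0] ?_ ?_ hk (fun i => act (wf i)) ?_ (fun i => hfv _) ?_
    · intro i
      fin_cases i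
      · exact C.add_mem h4 (C.pow_mem hA _)
      · exact C.mul_mem (C.mul_mem hd he) (C.add_mem hd he)
      · exact hA
      · exact C.zero_mem
    · simp only [Fin.sum_univ_four, D4_eq]
      simp
      grind
    · intro i t ht
      rcases ht with (ht | rfl) | rfl
      · exact Qset_fix _ _ ht
      · exact (wf_act i).2.1
      · exact (wf_act i).2.2
    · have : (fun i => act (wf i) (X 5)) = lf ∘ vf := by
        ext1 i; exact (wf_act i).1
      simp only [this]
      exact lf_inj.comp (by decide)
  have k2 : v ∈ Algebra.adjoin F2 (Qset ∪ {X 3}) := by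
    set C := Algebra.adjoin F2 (Qset ∪ {X 3} : Set S6) with hC
    have hs : ∀ t ∈ (Qset ∪ {X 3} : Set S6), t ∈ C := fun t ht => Algebra.subset_adjoin ht
    have hd : (X 3 : S6) ∈ C := hs _ (by simp)
    have h4 : gD4 ∈ C := hs _ (by simp [Qset])
    have h6 : gD6 ∈ C := hs _ (by simp [Qset])
    refine root_count _ 6 (X 4) v ![X 3^6 + gD4 * X 3^2 + gD6, X 3^5 + gD4 * X 3, X 3^4 + gD4,
      X 3^3, X 3^2, X 3] ?_ ?_ k1 (fun i => act (we i)) ?_ (fun i => hfv _) ?_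
    · intro i
      fin_cases i
      · exact C.add_mem (C.add_mem (C.pow_mem hd _) (C.mul_mem h4 (C.pow_mem hd _))) h6
      · exact C.add_mem (C.pow_mem hd _) (C.mul_mem h4 hd)
      · exact C.add_mem (C.pow_mem hd _) h4
      · exact C.pow_mem hd _
      · exact C.pow_mem hd _
      · exact hd
    · simp only [Fin.sum_univ_six, D4_eq, D6_eq]
      simp
      grind
    · intro i t ht
      rcases ht with ht | rfl
      · exact Qset_fix _ _ ht
      · exact (we_act i).2
    · have : (fun i => act (we i) (X 4)) = lf ∘ ve := by
        ext1 i; exact (we_act i).1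
      simp only [this]
      exact lf_inj.comp (by decide)
  set C := Algebra.adjoin F2 Qset with hC
  have hs : ∀ t ∈ Qset, t ∈ C := fun t ht => Algebra.subset_adjoin ht
  have h4 : gD4 ∈ C := hs _ (by simp [Qset])
  have h6 : gD6 ∈ C := hs _ (by simp [Qset])
  have hL : gL ∈ C := hs _ (by simp [Qset])
  refine root_count _ 7 (X 3) v ![gL, gD6, 0, gD4, 0, 0, 0] ?_ ?_ k2 (fun i => act (wd i)) ?_ (fun i => hfv _) ?_
  · intro i
    fin_cases i
    · exact hL
    · exact h6
    · exact C.zero_mem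
    · exact h4
    · exact C.zero_mem
    · exact C.zero_mem
    · exact C.zero_mem
  · simp only [Fin.sum_univ_seven, D4_eq, D6_eq, L_eq]
    simp
    grind
  · intro i t ht
    exact Qset_fix _ _ ht
  · have : (fun i => act (wd i) (X 3)) = lf ∘ vd := by
      ext1 i; exact wd_act i
    simp only [this]
    exact lf_inj.comp (by decide)

end step1


section rewr

noncomputable def gv : Fin 11 → S6 := ![gen c_p1, gen c_p2, gen c_ps, gen c_E4, gen c_E6, gen c_E7,
  gen c_D4, gen c_p3, gen c_g5, gen c_D6, gen c_L]

theorem gens_ofFn : gens = List.ofFn gv := by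
  simp [gens, gensL, gv]

def dig (k : ℕ) (i : Fin 11) : ℕ := k / 10 ^ (i : ℕ) % 10

theorem emon_ofFn {R : Type*} [CommSemiring R] (n : ℕ) (v : Fin n → R) (k : ℕ) :
    emon (List.ofFn v) k = ∏ i : Fin n, v i ^ (k / 10 ^ (i : ℕ) % 10) := by
  induction n generalizing k with
  | zero => simp [emon]
  | succ n ih =>
    rw [List.ofFn_succ, emon, ih, Fin.prod_univ_succ]
    simp [pow_succ', Nat.div_div_eq_div_mul]

noncomputable def mono (m : Fin 11 → ℕ) : S6 := ∏ i, gv i ^ m i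

theorem emon_gens (k : ℕ) : emon gens k = mono (dig k) := by
  rw [gens_ofFn, emon_ofFn]; rfl

theorem mono_add (m n : Fin 11 → ℕ) : mono (m + n) = mono m * mono n := by
  simp [mono, pow_add, Finset.prod_mul_distrib]

def wt (ω : Fin 11 → ℕ) (m : Fin 11 → ℕ) : ℕ := ∑ i, ω i * m i

theorem wt_add (ω m n : Fin 11 → ℕ) : wt ω (m + n) = wt ω m + wt ω n := by
  simp [wt, mul_add, Finset.sum_add_distrib]

theorem rewriting (rules : List (ℕ × List ℕ))
    (hval : ∀ r ∈ rules, emon gens r.1 = epoly gens r.2) (ω : Fin 11 → ℕ) (V : Submodule F2 S6)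
    (hdec : ∀ r ∈ rules, ∀ t ∈ r.2, wt ω (dig t) < wt ω (dig r.1) ∨ ∀ m, mono (m + dig t) ∈ V)
    (hstd : ∀ m, (∀ r ∈ rules, ¬ dig r.1 ≤ m) → mono m ∈ V) (m : Fin 11 → ℕ) : mono m ∈ V := by
  induction hn : wt ω m using Nat.strong_induction_on generalizing m with
  | _ n ih =>
    by_cases h : ∀ r ∈ rules, ¬ dig r.1 ≤ m
    · exact hstd m h
    · push Not at h
      obtain ⟨r, hr, hrm⟩ := h
      obtain ⟨m', rfl⟩ := exists_add_of_le hrm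
      rw [mono_add, ← emon_gens, hval r hr, epoly, mul_comm, ← List.sum_map_mul_left]
      apply list_sum_mem
      intro x hx
      obtain ⟨t, ht, rfl⟩ := List.mem_map.mp hx
      rw [emon_gens, ← mono_add]
      rcases hdec r hr t ht with h | h
      · refine ih (wt ω (m' + dig t)) ?_ _ rfl
        rw [← hn, wt_add, wt_add]; omega
      · exact h m'

noncomputable def A0 : Subalgebra F2 S6 := Algebra.adjoin F2 (Set.range gv)

theorem mono_mem (m : Fin 11 → ℕ) : mono m ∈ A0 :=
  Subalgebra.prod_mem _ fun i _ => Subalgebra.pow_mem _ (Algebra.subset_adjoin (Set.mem_range_self i)) _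

theorem A0_le (V : Submodule F2 S6) (h : ∀ m, mono m ∈ V) (a : S6) (ha : a ∈ A0) : a ∈ V := by
  rw [A0, Algebra.adjoin_range_eq_range_aeval] at ha
  obtain ⟨q, rfl⟩ := ha
  have : (aeval gv).toRingHom q = aeval gv q := rfl
  rw [this, q.as_sum, map_sum]
  apply Submodule.sum_mem
  intro s _
  rw [aeval_monomial, ← Algebra.smul_def]
  apply Submodule.smul_mem
  have e : (s.prod fun i k => gv i ^ k) = mono s := by
    rw [Finsupp.prod_fintype _ _ (by simp)]; rfl
  rw [e]; exact h s

def om2 : Fin 11 → ℕ := ![1, 8, 3, 9, 21, 30, 6, 12, 20, 14, 21]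
def om3 : Fin 11 → ℕ := ![0, 5, 5, 8, 29, 35, 25, 29, 30, 31, 44]

theorem chk_om2 : (rules2.all fun r => r.2.all fun t =>
    decide (wt om2 (dig t) < wt om2 (dig r.1)) || decide (1 ≤ dig t 10)) = true := by decide +kernel
theorem chk_om3 : (rules3.all fun r => r.2.all fun t =>
    decide (wt om3 (dig t) < wt om3 (dig r.1))) = true := by decide +kernel

def Std : Set (Fin 11 → ℕ) := {m | m 10 = 0 ∧ ∀ r ∈ rules2, ¬ dig r.1 ≤ m}

theorem mono_L (m : Fin 11 → ℕ) (h : 1 ≤ m 10) : ∃ a ∈ A0, gL * a = mono m := by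
  refine ⟨mono (m - Pi.single 10 1), mono_mem _, ?_⟩
  have e : gL = mono (Pi.single 10 1) := by
    rw [mono, Finset.prod_eq_single 10]
    · simp [gv]
    · intro b _ hb; simp [Pi.single_apply, hb]
    · simp
  rw [e, ← mono_add]
  congr 1
  rw [add_tsub_cancel_of_le]
  intro i
  by_cases hi : i = 10
  · subst hi; simpa using h
  · simp [Pi.single_apply, hi]

theorem span2 (a : S6) (ha : a ∈ A0) : ∃ l ∈ Finsupp.supported F2 F2 Std, ∃ a' ∈ A0,
    a = Finsupp.linearCombination F2 mono l + gL * a' := by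
  have h := A0_le (Submodule.span F2 (mono '' Std) ⊔
    (Subalgebra.toSubmodule A0).map (LinearMap.mulLeft F2 gL)) ?_ a ha
  · rw [Submodule.mem_sup] at h
    obtain ⟨y, hy, z, hz, rfl⟩ := h
    obtain ⟨l, hl, rfl⟩ := (Finsupp.mem_span_image_iff_linearCombination F2).mp hy
    obtain ⟨a', ha', rfl⟩ := hz
    exact ⟨l, hl, a', ha', rfl⟩
  · have hLm : ∀ m : Fin 11 → ℕ, 1 ≤ m 10 → mono m ∈ (Submodule.span F2 (mono '' Std) ⊔
        (Subalgebra.toSubmodule A0).map (LinearMap.mulLeft F2 gL)) := by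
      intro m hm
      obtain ⟨a', ha', e⟩ := mono_L m hm
      exact Submodule.mem_sup_right ⟨a', ha', e⟩
    refine rewriting rules2 (fun r hr => rules_valid r (List.mem_append_left _ hr)) om2 _ ?_ ?_
    · intro r hr t ht
      have := List.all_eq_true.mp (List.all_eq_true.mp chk_om2 r hr) t ht
      rw [Bool.or_eq_true, decide_eq_true_eq, decide_eq_true_eq] at this
      rcases this with h | h
      · exact Or.inl h
      · exact Or.inr fun m => hLm _ (le_trans h (Nat.le_add_left _ _))
    · intro m hm
      by_cases h : m 10 = 0
      · exact Submodule.mem_sup_left (Submodule.subset_span ⟨m, ⟨h, hm⟩, rfl⟩)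
      · exact hLm m (by omega)

noncomputable def Rsub : Subalgebra F2 S6 :=
  Algebra.adjoin F2 (Set.range fun i : Fin 6 => gv (Fin.castLE (by norm_num) i))

def Box : Set (Fin 11 → ℕ) := {m | (∀ i : Fin 6, m (Fin.castLE (by norm_num) i) = 0) ∧ ∀ i, m i ≤ 2}

theorem Box_finite : Box.Finite := by
  apply Set.Finite.subset (Set.finite_Iic (fun _ => 2 : Fin 11 → ℕ))
  intro m hm
  exact fun i => hm.2 i

theorem span3 (a : S6) (ha : a ∈ A0) : a ∈ Submodule.span Rsub (mono '' Box) := by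
  refine A0_le ((Submodule.span Rsub (mono '' Box)).restrictScalars F2) ?_ a ha
  refine rewriting rules3 (fun r hr => rules_valid r (List.mem_append_right _ hr)) om3 _ ?_ ?_
  · intro r hr t ht
    have := List.all_eq_true.mp (List.all_eq_true.mp chk_om3 r hr) t ht
    exact Or.inl (of_decide_eq_true this)
  · intro m hm
    let m1 : Fin 11 → ℕ := fun i => if (i : ℕ) < 6 then m i else 0
    let m2 : Fin 11 → ℕ := fun i => if (i : ℕ) < 6 then 0 else m i
    have e : m = m1 + m2 := by
      ext i; by_cases h : (i : ℕ) < 6 <;> simp [m1, m2, h]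
    have h1 : mono m1 ∈ Rsub := by
      apply Subalgebra.prod_mem
      intro i _
      by_cases h : (i : ℕ) < 6
      · exact Subalgebra.pow_mem _ (Algebra.subset_adjoin (Set.mem_range.mpr ⟨(⟨i, h⟩ : Fin 6), rfl⟩)) _
      · simp [m1, h, Subalgebra.one_mem]
    have h2 : m2 ∈ Box := by
      constructor
      · intro i
        have : ((Fin.castLE (by norm_num) i : Fin 11) : ℕ) < 6 := i.2
        simp [m2]
      · intro i
        by_contra hc
        push Not at hc
        by_cases h : (i : ℕ) < 6
        · simp [m2, h] at hc
        · simp only [m2, h, if_false] at hc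
          have : ∃ r ∈ rules3, ∀ j, dig r.1 j ≤ if j = i then 3 else 0 := by
            clear hc hm e h1
            revert h
            revert i
            decide +kernel
          obtain ⟨r, hr, hj⟩ := this
          apply hm r hr
          intro j
          refine (hj j).trans ?_
          split_ifs with hji
          · subst hji; exact hc
          · exact Nat.zero_le _
    rw [e, mono_add]
    exact Submodule.smul_mem _ (⟨_, h1⟩ : Rsub) (Submodule.subset_span ⟨m2, h2, rfl⟩)

end rewr


section lin

theorem triLI {ι M M' : Type*} [AddCommGroup M] [Module F2 M] [AddCommGroup M'] [Module F2 M']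
    (P : ι → M) (c : ι → M') (d : ι → ℕ) (S : Set ι) (T : ℕ → M →ₗ[F2] M')
    (h0 : ∀ m ∈ S, ∀ m' ∈ S, d m < d m' → T (d m') (P m) = 0)
    (h1 : ∀ m ∈ S, T (d m) (P m) = c m)
    (hc : ∀ N, LinearIndepOn F2 c {m | m ∈ S ∧ d m = N}) : LinearIndepOn F2 P S := by
  classical
  rw [linearIndepOn_iff]
  intro l hl hs
  by_contra hne
  have hne' : l.support.Nonempty := Finsupp.support_nonempty_iff.mpr hne
  obtain ⟨m0, hm0, hmax⟩ := l.support.exists_max_image d hne'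
  have hS : ∀ m ∈ l.support, m ∈ S := fun m hm => (Finsupp.mem_supported _ _).mp hl hm
  have hm0S := hS m0 hm0
  let l' := l.filter (fun m => d m = d m0)
  have hl' : l' ∈ Finsupp.supported F2 F2 {m | m ∈ S ∧ d m = d m0} := by
    rw [Finsupp.mem_supported]
    intro m hm
    have hm : m ∈ l'.support := hm
    rw [Finsupp.support_filter, Finset.mem_filter] at hm
    exact ⟨hS m hm.1, hm.2⟩
  have hz : Finsupp.linearCombination F2 c l' = 0 := by
    have := congrArg (T (d m0)) hs
    rw [map_zero, Finsupp.linearCombination_apply, Finsupp.sum, map_sum] at this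
    rw [Finsupp.linearCombination_apply, Finsupp.sum, Finsupp.support_filter, Finset.sum_filter]
    refine Eq.trans ?_ this
    apply Finset.sum_congr rfl
    intro m hm
    rw [map_smul]
    split_ifs with hd
    · have e : l' m = l m := Finsupp.filter_apply_pos (fun m => d m = d m0) l hd
      rw [e, ← hd, h1 m (hS m hm)]
    · rw [h0 m (hS m hm) m0 hm0S (lt_of_le_of_ne (hmax m hm) hd), smul_zero]
  have := linearIndepOn_iff.mp (hc (d m0)) l' hl' hz
  have h2 : l' m0 = l m0 := Finsupp.filter_apply_pos _ _ rfl
  rw [this] at h2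
  exact (Finsupp.mem_support_iff.mp hm0) h2.symm

theorem subsLI {ι M : Type*} [AddCommGroup M] [Module F2 M] (c : ι → M) (S : Set ι)
    (hS : S.Subsingleton) (h : ∀ m ∈ S, c m ≠ 0) : LinearIndepOn F2 c S := by
  rcases hS.eq_empty_or_singleton with rfl | ⟨x, rfl⟩
  · exact linearIndepOn_empty _ _
  · exact LinearIndepOn.singleton (h x rfl)

/-- polynomial version -/
theorem polyLI {ι B : Type*} [CommRing B] [Algebra F2 B] (P : ι → Polynomial B) (d : ι → ℕ) (S : Set ι)
    (hd : ∀ m ∈ S, (P m).natDegree ≤ d m)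
    (hc : ∀ N, LinearIndepOn F2 (fun m => (P m).coeff (d m)) {m | m ∈ S ∧ d m = N}) :
    LinearIndepOn F2 P S := by
  refine triLI P _ d S (fun N => (Polynomial.lcoeff B N).restrictScalars F2) ?_ (fun m _ => rfl) hc
  intro m hm m' _ h
  exact Polynomial.coeff_eq_zero_of_natDegree_lt (lt_of_le_of_lt (hd m hm) h)

/-- degree bound with specified top coefficient -/
def DL {B : Type*} [CommRing B] (P : Polynomial B) (d : ℕ) (c : B) : Prop :=
  P.natDegree ≤ d ∧ P.coeff d = c

theorem DL.mul {B : Type*} [CommRing B] {P Q : Polynomial B} {d e : ℕ} {c c' : B}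
    (h : DL P d c) (h' : DL Q e c') : DL (P * Q) (d + e) (c * c') :=
  ⟨Polynomial.natDegree_mul_le_of_le h.1 h'.1, by
    rw [Polynomial.coeff_mul_add_eq_of_natDegree_le h.1 h'.1, h.2, h'.2]⟩

theorem DL.one {B : Type*} [CommRing B] : DL (1 : Polynomial B) 0 1 := ⟨by simp, by simp⟩
theorem DL.zero {B : Type*} [CommRing B] (n : ℕ) : DL (0 : Polynomial B) n 0 := ⟨by simp, by simp⟩
theorem DL.C {B : Type*} [CommRing B] (b : B) : DL (Polynomial.C b) 0 b := ⟨by simp, by simp⟩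
theorem DL.X {B : Type*} [CommRing B] : DL (Polynomial.X : Polynomial B) 1 1 :=
  ⟨Polynomial.natDegree_X_le, by simp⟩

theorem DL.pow {B : Type*} [CommRing B] {P : Polynomial B} {d : ℕ} {c : B}
    (h : DL P d c) (n : ℕ) : DL (P ^ n) (d * n) (c ^ n) := by
  induction n with
  | zero => simpa using DL.one
  | succ n ih => rw [pow_succ, pow_succ, Nat.mul_succ]; exact ih.mul h

theorem DL.add {B : Type*} [CommRing B] {P Q : Polynomial B} {d : ℕ} {c c' : B}
    (h : DL P d c) (h' : DL Q d c') : DL (P + Q) d (c + c') :=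
  ⟨Polynomial.natDegree_add_le_of_degree_le h.1 h'.1, by rw [Polynomial.coeff_add, h.2, h'.2]⟩

theorem DL.weak {B : Type*} [CommRing B] {P : Polynomial B} {d e : ℕ} {c : B}
    (h : DL P d c) (hd : d < e) : DL P e 0 :=
  ⟨h.1.trans hd.le, Polynomial.coeff_eq_zero_of_natDegree_lt (lt_of_le_of_lt h.1 hd)⟩

theorem DL.prod {B : Type*} [CommRing B] {n : ℕ} (P : Fin n → Polynomial B) (d : Fin n → ℕ) (c : Fin n → B)
    (h : ∀ i, DL (P i) (d i) (c i)) : DL (∏ i, P i) (∑ i, d i) (∏ i, c i) := by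
  induction n with
  | zero => simpa using DL.one
  | succ n ih =>
    rw [Fin.prod_univ_succ, Fin.prod_univ_succ, Fin.sum_univ_succ]
    exact (h 0).mul (ih _ _ _ fun i => h i.succ)

theorem DL_emon {B : Type*} [CommRing B] (n : ℕ) (vs : Fin n → Polynomial B) (ds : Fin n → ℕ) (cs : Fin n → B)
    (h : ∀ i, DL (vs i) (ds i) (cs i)) (k : ℕ) :
    DL (emon (List.ofFn vs) k) (hdeg (List.ofFn ds) k) (emon (List.ofFn cs) k) := by
  induction n generalizing k with
  | zero => simpa [emon, hdeg] using DL.one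
  | succ n ih =>
    simp only [List.ofFn_succ, emon, hdeg]
    exact ((h 0).pow _).mul (ih _ _ _ (fun i => h i.succ) _)

theorem DL_epoly {B : Type*} [CommRing B] (n : ℕ) (vs : Fin n → Polynomial B) (ds : Fin n → ℕ) (cs : Fin n → B)
    (h : ∀ i, DL (vs i) (ds i) (cs i)) (N : ℕ) (g : List ℕ)
    (hg : (g.all fun k => decide (hdeg (List.ofFn ds) k ≤ N)) = true) :
    DL (epoly (List.ofFn vs) g) N
      (epoly (List.ofFn cs) (g.filter fun k => hdeg (List.ofFn ds) k == N)) := by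
  induction g with
  | nil => exact DL.zero N
  | cons k g ih =>
    simp only [List.all_cons, Bool.and_eq_true, decide_eq_true_eq] at hg
    have hk := DL_emon n vs ds cs h k
    have e : epoly (List.ofFn vs) (k :: g) = emon (List.ofFn vs) k + epoly (List.ofFn vs) g := by
      simp [epoly]
    rw [e, List.filter_cons]
    by_cases hkN : hdeg (List.ofFn ds) k = N
    · rw [if_pos (by simpa using hkN)]
      have e2 : ∀ g', epoly (List.ofFn cs) (k :: g') = emon (List.ofFn cs) k + epoly (List.ofFn cs) g' := by
        simp [epoly]
      rw [e2]
      exact (hkN ▸ hk).add (ih hg.2)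
    · rw [if_neg (by simpa using hkN)]
      have := (hk.weak (lt_of_le_of_ne hg.1 hkN)).add (ih hg.2)
      rwa [zero_add] at this

/-- standardness, explicitly -/
theorem std_iff (m : Fin 11 → ℕ) (h : m ∈ Std) : m 10 = 0 ∧ m 1 ≤ 3 ∧ m 7 ≤ 1 ∧ m 8 ≤ 1 ∧
    (m 5 = 0 ∨ (m 6 = 0 ∧ m 7 = 0 ∧ m 9 = 0)) ∧ (m 8 = 0 ∨ (m 9 = 0 ∧ m 1 ≤ 2 ∧ (m 1 = 0 ∨ m 7 = 0)))
    ∧ (m 4 = 0 ∨ m 9 = 0) := by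
  obtain ⟨h10, h⟩ := h
  have key : ∀ (k : ℕ) (v : Fin 11 → ℕ), k ∈ rules2.map Prod.fst → dig k = v →
      ¬ (v 0 ≤ m 0 ∧ v 1 ≤ m 1 ∧ v 2 ≤ m 2 ∧ v 3 ≤ m 3 ∧ v 4 ≤ m 4 ∧ v 5 ≤ m 5 ∧ v 6 ≤ m 6 ∧ v 7 ≤ m 7
        ∧ v 8 ≤ m 8 ∧ v 9 ≤ m 9 ∧ v 10 ≤ m 10) := by
    intro k v hk hv hc
    obtain ⟨r, hr, rfl⟩ := List.mem_map.mp hk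
    apply h r hr
    rw [hv]
    obtain ⟨c0, c1, c2, c3, c4, c5, c6, c7, c8, c9, c10⟩ := hc
    intro i
    fin_cases i <;> assumption
  have r1 := key 40 ![0,4,0,0,0,0,0,0,0,0,0] (by decide +kernel) (by decide +kernel)
  have r2 := key 1100000 ![0,0,0,0,0,1,1,0,0,0,0] (by decide +kernel) (by decide +kernel)
  have r3 := key 10100000 ![0,0,0,0,0,1,0,1,0,0,0] (by decide +kernel) (by decide +kernel)
  have r4 := key 20000000 ![0,0,0,0,0,0,0,2,0,0,0] (by decide +kernel) (by decide +kernel)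
  have r5 := key 100000030 ![0,3,0,0,0,0,0,0,1,0,0] (by decide +kernel) (by decide +kernel)
  have r6 := key 110000010 ![0,1,0,0,0,0,0,1,1,0,0] (by decide +kernel) (by decide +kernel)
  have r7 := key 200000000 ![0,0,0,0,0,0,0,0,2,0,0] (by decide +kernel) (by decide +kernel)
  have r8 := key 1000010000 ![0,0,0,0,1,0,0,0,0,1,0] (by decide +kernel) (by decide +kernel)
  have r9 := key 1000100000 ![0,0,0,0,0,1,0,0,0,1,0] (by decide +kernel) (by decide +kernel)
  have r10 := key 1100000000 ![0,0,0,0,0,0,0,0,1,1,0] (by decide +kernel) (by decide +kernel)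
  simp at r1 r2 r3 r4 r5 r6 r7 r8 r9 r10
  refine ⟨h10, ?_, ?_, ?_, ?_, ?_, ?_⟩ <;> omega

theorem comb1 (a1 a2 a4 a5 a6 a7 a8 a9 b1 b2 b4 b5 b6 b7 b8 b9 : ℕ) (h1 : a1 ≤ 3)
    (h8 : a8 ≤ 1) (h5 : 1 ≤ a5) (h5' : (a6 = 0 ∧ a7 = 0 ∧ a9 = 0)) (h6 : (a8 = 0 ∨ (a1 ≤ 2)))
    (k1 : b1 ≤ 3) (k8 : b8 ≤ 1) (k5 : 1 ≤ b5) (k5' : (b6 = 0 ∧ b7 = 0 ∧ b9 = 0)) (k6 : (b8 = 0 ∨ (b1 ≤ 2)))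
    (hn : 3 * a1 + 3 * a2 + 6 * a4 + 7 * a5 + 5 * a8 = 3 * b1 + 3 * b2 + 6 * b4 + 7 * b5 + 5 * b8)
    (hT : a1 + 2 * a2 + 6 * a4 + 7 * a5 + 4 * a8 = b1 + 2 * b2 + 6 * b4 + 7 * b5 + 4 * b8)
    (hb : a4 = b4) : a1 = b1 ∧ a2 = b2 ∧ a5 = b5 ∧ a8 = b8 := by
  have e : 7 * a5 + 2 * a8 + 3 * b1 = 7 * b5 + 2 * b8 + 3 * a1 := by omega
  have e1 : a1 = b1 ∧ a8 = b8 ∧ a5 = b5 := by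
    clear hn hT k5' h5'
    interval_cases a8 <;> interval_cases b8 <;> interval_cases a1 <;> omega
  omega

theorem comb2 (a1 a2 a4 a5 a6 a7 a8 a9 b1 b2 b4 b5 b6 b7 b8 b9 : ℕ) (h1 : a1 ≤ 3)
    (h8 : a8 ≤ 1) (h5 : 1 ≤ a5) (h5' : (a6 = 0 ∧ a7 = 0 ∧ a9 = 0)) (h6 : (a8 = 0 ∨ (a1 ≤ 2)))
    (k1 : b1 ≤ 3) (k8 : b8 ≤ 1) (k7 : b7 ≤ 1) (k5 : b5 = 0)
    (k6 : (b8 = 0 ∨ (b9 = 0 ∧ b1 ≤ 2 ∧ (b1 = 0 ∨ b7 = 0)))) (k9 : b4 = 0 ∨ b9 = 0)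
    (hn : 3 * a1 + 3 * a2 + 6 * a4 + 7 * a5 + 4 * a6 + 5 * a7 + 5 * a8 + 6 * a9 =
      3 * b1 + 3 * b2 + 6 * b4 + 7 * b5 + 4 * b6 + 5 * b7 + 5 * b8 + 6 * b9)
    (hT : a1 + 2 * a2 + 6 * a4 + 7 * a5 + a7 + 4 * a8 = b1 + 2 * b2 + 6 * b4 + 7 * b5 + b7 + 4 * b8) :
    a4 < b4 := by
  obtain ⟨rfl, rfl, rfl⟩ := h5'
  subst k5
  have e : 6 * b4 + 3 * a1 + 2 * b8 = 6 * a4 + 7 * a5 + 2 * a8 + 3 * b1 + 8 * b6 + 7 * b7 + 12 * b9 := by omega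
  clear hn hT k6 k9
  by_contra hlt
  have e1 : 7 * a5 + 2 * a8 + 3 * b1 + 8 * b6 + 7 * b7 + 12 * b9 ≤ 3 * a1 + 2 * b8 := by omega
  have e2 : a5 = 1 := by omega
  have e3 : b6 = 0 := by omega
  have e4 : b7 = 0 := by omega
  have e5 : b9 = 0 := by omega
  subst e2 e3 e4 e5
  interval_cases a8 <;> interval_cases b8 <;> interval_cases a1 <;> omega

theorem comb3 (a1 a2 a4 a6 a7 a8 a9 b1 b2 b4 b6 b7 b8 b9 : ℕ) (h1 : a1 ≤ 3)
    (h8 : a8 ≤ 1) (h7 : a7 ≤ 1)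
    (h6 : (a8 = 0 ∨ (a9 = 0 ∧ a1 ≤ 2 ∧ (a1 = 0 ∨ a7 = 0)))) (h9 : a4 = 0 ∨ a9 = 0)
    (k1 : b1 ≤ 3) (k8 : b8 ≤ 1) (k7 : b7 ≤ 1)
    (k6 : (b8 = 0 ∨ (b9 = 0 ∧ b1 ≤ 2 ∧ (b1 = 0 ∨ b7 = 0)))) (k9 : b4 = 0 ∨ b9 = 0)
    (hn : 3 * a1 + 3 * a2 + 6 * a4 + 4 * a6 + 5 * a7 + 5 * a8 + 6 * a9 =
      3 * b1 + 3 * b2 + 6 * b4 + 4 * b6 + 5 * b7 + 5 * b8 + 6 * b9)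
    (hT : a1 + 2 * a2 + 6 * a4 + a7 + 4 * a8 = b1 + 2 * b2 + 6 * b4 + b7 + 4 * b8)
    (hr : 2 * a6 + a7 + a8 + 3 * a4 = 2 * b6 + b7 + b8 + 3 * b4) :
    a1 = b1 ∧ a2 = b2 ∧ a4 = b4 ∧ a6 = b6 ∧ a7 = b7 ∧ a8 = b8 ∧ a9 = b9 := by
  have e : 6 * a4 + 2 * a8 + b1 + b7 + 4 * b9 = 6 * b4 + 2 * b8 + a1 + a7 + 4 * a9 := by omega
  have e1 : a1 = b1 ∧ a4 = b4 ∧ a6 = b6 ∧ a7 = b7 ∧ a8 = b8 ∧ a9 = b9 := by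
    clear hn hT
    rcases h9 with rfl | rfl <;> rcases k9 with rfl | rfl <;>
    interval_cases a7 <;> interval_cases b7 <;> interval_cases a8 <;> interval_cases b8 <;> omega
  omega

end lin


section lin2

def nd (m : Fin 11 → ℕ) : ℕ := 2 * m 0 + 3 * m 1 + 3 * m 2 + 4 * m 3 + 6 * m 4 + 7 * m 5 + 4 * m 6
   + 5 * m 7 + 5 * m 8 + 6 * m 9 + 7 * m 10
def td (m : Fin 11 → ℕ) : ℕ := m 1 + 2 * m 2 + 6 * m 4 + 7 * m 5 + m 7 + 4 * m 8

noncomputable def qm (m : Fin 11 → ℕ) : Polynomial F2 :=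
  Polynomial.X ^ (2 * m 6 + m 7 + m 8 + 2 * m 5) * (Polynomial.X ^ 3 + 1) ^ (m 4)

theorem qm_DL (m : Fin 11 → ℕ) : DL (qm m) (2 * m 6 + m 7 + m 8 + 2 * m 5 + 3 * m 4) 1 := by
  have h3 : DL (Polynomial.X ^ 3 + 1 : Polynomial F2) 3 1 := by
    have := (DL.X (B := F2)).pow 3
    simpa using this.add (DL.one.weak (by norm_num : 0 < 1 * 3))
  have := ((DL.X (B := F2)).pow (2 * m 6 + m 7 + m 8 + 2 * m 5)).mul (h3.pow (m 4))
  simpa [qm] using this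

theorem taylor_qm (m : Fin 11 → ℕ) : ∃ w : Polynomial F2, w.coeff 0 = 1 ∧
    Polynomial.taylor 1 (qm m) = Polynomial.X ^ (m 4) * w := by
  refine ⟨(Polynomial.X + 1) ^ (2 * m 6 + m 7 + m 8 + 2 * m 5) *
    (Polynomial.X ^ 2 + Polynomial.X + 1) ^ (m 4), ?_, ?_⟩
  · rw [Polynomial.coeff_zero_eq_eval_zero]; simp
  · have : ((Polynomial.X + 1) ^ 3 + 1 : Polynomial F2) =
      Polynomial.X * (Polynomial.X ^ 2 + Polynomial.X + 1) := by grind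
    rw [Polynomial.taylor_apply, qm]
    simp only [Polynomial.mul_comp, Polynomial.pow_comp, Polynomial.add_comp, Polynomial.X_comp,
      Polynomial.one_comp, map_one]
    rw [this, mul_pow]
    ring

theorem ext11 {m m' : Fin 11 → ℕ} (h0 : m 0 = m' 0) (h1 : m 1 = m' 1) (h2 : m 2 = m' 2)
    (h3 : m 3 = m' 3) (h4 : m 4 = m' 4) (h5 : m 5 = m' 5) (h6 : m 6 = m' 6) (h7 : m 7 = m' 7)
    (h8 : m 8 = m' 8) (h9 : m 9 = m' 9) (h10 : m 10 = m' 10) : m = m' := by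
  ext x
  fin_cases x <;> assumption

theorem qm_LI (U : Set (Fin 11 → ℕ)) (n t i j : ℕ)
    (hU : ∀ m ∈ U, m ∈ Std ∧ nd m = n ∧ td m = t ∧ m 0 = i ∧ m 3 = j) : LinearIndepOn F2 qm U := by
  let Tm : ℕ → Polynomial F2 →ₗ[F2] Polynomial F2 := fun N => if N = 0 then LinearMap.id else
    (Polynomial.monomial 0).comp ((Polynomial.lcoeff F2 (n + 1 - N)).comp (Polynomial.taylor (1 : F2)))
  have hle : ∀ m ∈ U, m 4 ≤ n := by
    intro m hm
    have := (hU m hm).2.1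
    rw [nd] at this
    omega
  let d : (Fin 11 → ℕ) → ℕ := fun m => if 1 ≤ m 5 then n + 1 - m 4 else 0
  let c : (Fin 11 → ℕ) → Polynomial F2 := fun m => if 1 ≤ m 5 then 1 else qm m
  refine triLI qm c d U Tm ?_ ?_ ?_
  · intro m hm m' hm' hd
    have h5 : 1 ≤ m' 5 := by
      by_contra h; simp [d, h] at hd
    have hle' := hle m' hm'
    have hlt : m' 4 < m 4 := by
      by_cases h5' : 1 ≤ m 5
      · simp only [d, h5, h5', if_true] at hd
        have := hle m hm
        omega
      · obtain ⟨hS, hn, ht, hi, hj⟩ := hU m hm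
        obtain ⟨hS', hn', ht', hi', hj'⟩ := hU m' hm'
        obtain ⟨s1, s2, s3, s4, s5, s6, s7⟩ := std_iff m hS
        obtain ⟨u1, u2, u3, u4, u5, u6, u7⟩ := std_iff m' hS'
        rw [nd] at hn hn'
        rw [td] at ht ht'
        have hN := hn.trans hn'.symm
        have hT := ht.trans ht'.symm
        rw [hi, hj, s1, hi', hj', u1] at hN
        clear hn hn' ht ht' hle hle' hd
        exact comb2 (m' 1) (m' 2) (m' 4) (m' 5) (m' 6) (m' 7) (m' 8) (m' 9)
          (m 1) (m 2) (m 4) (m 5) (m 6) (m 7) (m 8) (m 9) u2 u4 h5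
          (u5.resolve_left (Nat.one_le_iff_ne_zero.mp h5)) (u6.imp_right fun h => h.2.1)
          s2 s4 s3 (by clear hN hT; omega) s6 s7 (by clear hT s5 s6 s7 u5 u6 u7; linarith)
          (by clear hN s5 s6 s7 u5 u6 u7; linarith)
    have hdm : d m' = n + 1 - m' 4 := by simp [d, h5]
    have hd0 : d m' ≠ 0 := by omega
    obtain ⟨w, _, hw⟩ := taylor_qm m
    have he : n + 1 - d m' = m' 4 := by omega
    simp only [Tm, hd0, if_false, LinearMap.comp_apply, Polynomial.lcoeff_apply, he]
    rw [hw, Polynomial.coeff_X_pow_mul', if_neg (by omega), map_zero]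
  · intro m hm
    by_cases h5 : 1 ≤ m 5
    · have hdm : d m = n + 1 - m 4 := by simp [d, h5]
      have := hle m hm
      have hd0 : d m ≠ 0 := by omega
      obtain ⟨w, hw0, hw⟩ := taylor_qm m
      have he : n + 1 - d m = m 4 := by omega
      simp only [Tm, hd0, if_false, LinearMap.comp_apply, Polynomial.lcoeff_apply, he, c, h5, if_true]
      rw [hw, Polynomial.coeff_X_pow_mul', if_pos le_rfl, Nat.sub_self, hw0]
      simp
    · simp [Tm, d, c, h5]
  · intro N
    by_cases hN : N = 0
    · have h5 : ∀ m ∈ {m | m ∈ U ∧ d m = N}, m 5 = 0 := by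
        rintro m ⟨hm, hd⟩
        by_contra h
        have h' : 1 ≤ m 5 := by omega
        simp only [d, h', if_true] at hd
        have := hle m hm
        omega
      have hq : LinearIndepOn F2 qm {m | m ∈ U ∧ d m = N} := by
        refine polyLI qm (fun m => 2 * m 6 + m 7 + m 8 + 2 * m 5 + 3 * m 4) _ (fun m _ => (qm_DL m).1) ?_
        intro N'
        apply subsLI
        · rintro m ⟨hm, hr⟩ m' ⟨hm', hr'⟩
          have e5 := h5 m hm
          have e5' := h5 m' hm'
          obtain ⟨hS, hn, ht, hi, hj⟩ := hU m hm.1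
          obtain ⟨hS', hn', ht', hi', hj'⟩ := hU m' hm'.1
          obtain ⟨s1, s2, s3, s4, s5, s6, s7⟩ := std_iff m hS
          obtain ⟨u1, u2, u3, u4, u5, u6, u7⟩ := std_iff m' hS'
          rw [nd] at hn hn'
          rw [td] at ht ht'
          have hN := hn.trans hn'.symm
          have hT := ht.trans ht'.symm
          rw [hi, hj, s1, hi', hj', u1, e5, e5'] at hN
          rw [e5, e5'] at hT
          have hR := hr.trans hr'.symm
          rw [e5, e5'] at hR
          clear hn hn' ht ht' hr hr'
          obtain ⟨k1, k2, k3, k4, k5, k6, k7⟩ := comb3 (m 1) (m 2) (m 4) (m 6) (m 7) (m 8) (m 9)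
            (m' 1) (m' 2) (m' 4) (m' 6) (m' 7) (m' 8) (m' 9) s2 s4 s3 s6 s7 u2 u4 u3 u6 u7
            (by linarith) (by linarith) (by linarith)
          exact ext11 (hi.trans hi'.symm) k1 k2 (hj.trans hj'.symm) k3 (e5.trans e5'.symm) k4 k5 k6 k7
            (s1.trans u1.symm)
        · intro m _
          rw [(qm_DL m).2]; exact one_ne_zero
      refine hq.congr ?_
      intro m hm
      simp [c, h5 m hm]
    · have h5 : ∀ m ∈ {m | m ∈ U ∧ d m = N}, 1 ≤ m 5 ∧ m 4 = n + 1 - N := by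
        rintro m ⟨hm, hd⟩
        have := hle m hm
        by_cases h : 1 ≤ m 5
        · simp only [d, h, if_true] at hd
          omega
        · simp only [d, h, if_false] at hd
          omega
      apply subsLI
      · rintro m hm m' hm'
        obtain ⟨e5, e4⟩ := h5 m hm
        obtain ⟨e5', e4'⟩ := h5 m' hm'
        obtain ⟨hS, hn, ht, hi, hj⟩ := hU m hm.1
        obtain ⟨hS', hn', ht', hi', hj'⟩ := hU m' hm'.1
        obtain ⟨s1, s2, s3, s4, s5, s6, s7⟩ := std_iff m hS
        obtain ⟨u1, u2, u3, u4, u5, u6, u7⟩ := std_iff m' hS'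
        rw [nd] at hn hn'
        rw [td] at ht ht'
        have hN := hn.trans hn'.symm
        have hT := ht.trans ht'.symm
        have z := s5.resolve_left (Nat.one_le_iff_ne_zero.mp e5)
        have z' := u5.resolve_left (Nat.one_le_iff_ne_zero.mp e5')
        have e44 := e4.trans e4'.symm
        rw [hi, hj, s1, hi', hj', u1, z.1, z.2.1, z.2.2, z'.1, z'.2.1, z'.2.2] at hN
        rw [z.2.1, z'.2.1] at hT
        clear hn hn' ht ht' e4 e4'
        obtain ⟨k1, k2, k3, k4⟩ := comb1 (m 1) (m 2) (m 4) (m 5) (m 6) (m 7) (m 8) (m 9)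
          (m' 1) (m' 2) (m' 4) (m' 5) (m' 6) (m' 7) (m' 8) (m' 9) s2 s4 e5 z (s6.imp_right fun h => h.2.1)
          u2 u4 e5' z' (u6.imp_right fun h => h.2.1) (by linarith) (by linarith) e44
        exact ext11 (hi.trans hi'.symm) k1 k2 (hj.trans hj'.symm) e44 k3 (z.1.trans z'.1.symm)
          (z.2.1.trans z'.2.1.symm) k4 (z.2.2.trans z'.2.2.symm) (s1.trans u1.symm)
      · intro m hm
        simp [c, (h5 m hm).1]


end lin2


section lin3

abbrev B1 := Polynomial F2
def B2 : Type := Polynomial B1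
noncomputable instance : CommRing B2 := inferInstanceAs (CommRing (Polynomial B1))
noncomputable instance : Algebra F2 B2 := inferInstanceAs (Algebra F2 (Polynomial B1))
instance : IsDomain B2 := inferInstanceAs (IsDomain (Polynomial B1))
def B3 : Type := Polynomial B2
noncomputable instance : CommRing B3 := inferInstanceAs (CommRing (Polynomial B2))
noncomputable instance : Algebra F2 B3 := inferInstanceAs (Algebra F2 (Polynomial B2))
instance : IsDomain B3 := inferInstanceAs (IsDomain (Polynomial B2))
abbrev B4 := Polynomial B3

noncomputable def i12 : B1 →+* B2 := (Polynomial.C : B1 →+* Polynomial B1)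
noncomputable def E2 : B2 := (Polynomial.X : Polynomial B1)
noncomputable def i23 : B2 →+* B3 := (Polynomial.C : B2 →+* Polynomial B2)
noncomputable def pp3 : B3 := (Polynomial.X : Polynomial B2)
noncomputable def x3 : B3 := i23 (i12 Polynomial.X)
noncomputable def E3 : B3 := i23 E2
noncomputable def x4 : B4 := Polynomial.C x3
noncomputable def E4' : B4 := Polynomial.C E3
noncomputable def p4 : B4 := Polynomial.C pp3
noncomputable def s4 : B4 := Polynomial.X

/-- values except E6, E7 -/
noncomputable def v0 : Fin 11 → B4 := ![p4, s4, x4 ^ 3 + x4 * p4 ^ 2 + 1 + s4 ^ 2, E4', 0, 0, x4 ^ 2,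
  x4 + x4 * s4 + p4, x4 ^ 7 + x4 ^ 4 + x4 ^ 3 * p4 ^ 4 + x4 + x4 * s4 ^ 4 + p4 ^ 4, 1, 0]
def d0 : Fin 11 → ℕ := ![0, 1, 2, 0, 0, 0, 0, 1, 4, 0, 0]
noncomputable def cs0 : Fin 11 → B3 := ![pp3, 1, 1, E3, 0, 0, x3 ^ 2, x3, x3, 1, 0]

theorem v0_DL (i : Fin 11) : DL (v0 i) (d0 i) (cs0 i) := by
  have hx : DL x4 0 x3 := DL.C _
  have hp : DL p4 0 pp3 := DL.C _
  have hs : DL (s4 : Polynomial B3) 1 (1 : B3) := DL.X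
  fin_cases i
  · exact hp
  · exact hs
  · have h1 : DL (x4 ^ 3 + x4 * p4 ^ 2 + 1) 0 (x3 ^ 3 + x3 * pp3 ^ 2 + 1) :=
      ((hx.pow 3).add (hx.mul (hp.pow 2))).add DL.one
    have := (h1.weak (by norm_num : 0 < 1 * 2)).add (hs.pow 2)
    rw [zero_add, one_pow] at this
    exact this
  · exact DL.C _
  · exact DL.zero 0
  · exact DL.zero 0
  · exact hx.pow 2
  · have := ((hx.weak (by norm_num : 0 < 0 + 1)).add (hx.mul hs)).add (hp.weak (by norm_num : 0 < 0 + 1))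
    rw [zero_add, mul_one, add_zero, zero_add] at this
    exact this
  · have h1 : DL (x4 ^ 7 + x4 ^ 4 + x4 ^ 3 * p4 ^ 4 + x4) 0 (x3 ^ 7 + x3 ^ 4 + x3 ^ 3 * pp3 ^ 4 + x3) :=
      (((hx.pow 7).add (hx.pow 4)).add ((hx.pow 3).mul (hp.pow 4))).add hx
    have := ((h1.weak (by norm_num : 0 < 0 + 1 * 4)).add (hx.mul (hs.pow 4))).add
      ((hp.pow 4).weak (by norm_num : 0 * 4 < 0 + 1 * 4))
    rw [zero_add, one_pow, mul_one, add_zero, zero_add] at this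
    exact this
  · exact DL.one
  · exact DL.zero 0

def tail6 : List ℕ := (rules2.getD 7 (0, [])).2
def tail7 : List ℕ := (rules2.getD 8 (0, [])).2

noncomputable def vE6 : B4 := epoly (List.ofFn v0) tail6
noncomputable def vE7 : B4 := epoly (List.ofFn v0) tail7

theorem vE6_DL : DL vE6 6 (x3 ^ 3 + 1) := by
  have := DL_epoly 11 v0 d0 cs0 v0_DL 6 tail6 (by decide +kernel)
  have e : (tail6.filter fun k => hdeg (List.ofFn d0) k == 6) = [220, 101000100] := by decide +kernel
  rw [e] at this
  have e2 : epoly (List.ofFn cs0) [220, 101000100] = x3 ^ 3 + 1 := by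
    simp [epoly, emon, cs0]; ring
  rw [e2] at this
  exact this

theorem vE7_DL : DL vE7 7 (x3 ^ 2) := by
  have := DL_epoly 11 v0 d0 cs0 v0_DL 7 tail7 (by decide +kernel)
  have e : (tail7.filter fun k => hdeg (List.ofFn d0) k == 7) = [110000100] := by decide +kernel
  rw [e] at this
  have e2 : epoly (List.ofFn cs0) [110000100] = x3 ^ 2 := by
    simp [epoly, emon, cs0]; ring
  rw [e2] at this
  exact this

noncomputable def v1 (i : Fin 11) : B4 := if i = 4 then vE6 else if i = 5 then vE7 else v0 i
def d1 (i : Fin 11) : ℕ := if i = 4 then 6 else if i = 5 then 7 else d0 i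
noncomputable def cs1 (i : Fin 11) : B3 := if i = 4 then x3 ^ 3 + 1 else if i = 5 then x3 ^ 2 else cs0 i

theorem v1_DL (i : Fin 11) : DL (v1 i) (d1 i) (cs1 i) := by
  by_cases h4 : i = 4
  · simp only [v1, d1, cs1, h4, if_true]
    exact vE6_DL
  · by_cases h5 : i = 5
    · simp only [v1, d1, cs1, h4, h5, if_true, if_false]
      exact vE7_DL
    · simp only [v1, d1, cs1, h4, h5, if_false]
      exact v0_DL i

noncomputable def vmon (m : Fin 11 → ℕ) : B4 := ∏ i, v1 i ^ m i


end lin3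


section lin4

theorem vmon_DL (m : Fin 11 → ℕ) (hm : m 10 = 0) : DL (vmon m) (td m)
    (pp3 ^ (m 0) * i23 (E2 ^ (m 3) * i12 (qm m))) := by
  have := DL.prod (fun i => v1 i ^ m i) _ _ (fun i => (v1_DL i).pow (m i))
  have e1 : ∑ i, d1 i * m i = td m := by
    simp only [Fin.sum_univ_succ, td]
    simp [d1, d0, Fin.ext_iff, hm]
    ring
  have e2 : ∏ i, cs1 i ^ m i = pp3 ^ (m 0) * i23 (E2 ^ (m 3) * i12 (qm m)) := by
    rw [qm]
    simp only [Fin.prod_univ_succ, map_mul, map_pow, map_add, map_one]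
    simp [cs1, cs0, Fin.ext_iff, hm]
    left
    rw [x3, E3]
    ring
  rw [e1, e2] at this
  exact this

theorem vmon_LI (U : Set (Fin 11 → ℕ)) (n : ℕ) (hU : ∀ m ∈ U, m ∈ Std ∧ nd m = n) :
    LinearIndepOn F2 vmon U := by
  refine polyLI vmon td U (fun m hm => (vmon_DL m (hU m hm).1.1).1) ?_
  intro t
  have h3 : LinearIndepOn F2 (fun m : Fin 11 → ℕ => pp3 ^ (m 0) * i23 (E2 ^ (m 3) * i12 (qm m)))
      {m | m ∈ U ∧ td m = t} := by
    have hD : ∀ (m : Fin 11 → ℕ) (b : B2), DL (Polynomial.X ^ (m 0) * Polynomial.C b) (m 0) b := by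
      intro m b
      simpa using ((DL.X (B := B2)).pow (m 0)).mul (DL.C b)
    refine polyLI (B := B2) (fun m : Fin 11 → ℕ => Polynomial.X ^ (m 0) *
      Polynomial.C (E2 ^ (m 3) * i12 (qm m))) (fun m => m 0) _ (fun m _ => (hD m _).1) ?_
    intro i
    simp only [(hD _ _).2]
    have hD2 : ∀ (m : Fin 11 → ℕ) (b : B1), DL (Polynomial.X ^ (m 3) * Polynomial.C b) (m 3) b := by
      intro m b
      simpa using ((DL.X (B := B1)).pow (m 3)).mul (DL.C b)
    refine polyLI (B := B1) (fun m : Fin 11 → ℕ => Polynomial.X ^ (m 3) *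
      Polynomial.C (qm m)) (fun m => m 3) _ (fun m _ => (hD2 m _).1) ?_
    intro j
    simp only [(hD2 _ _).2]
    refine qm_LI _ n t i j ?_
    rintro m ⟨⟨⟨h1, h2⟩, h3⟩, h4⟩
    exact ⟨(hU m h1).1, (hU m h1).2, h2, h3, h4⟩
  refine h3.congr ?_
  rintro m ⟨hm, ht⟩
  exact ((vmon_DL m (hU m hm).1.1).2).symm

end lin4



section pt

theorem DL.deg_ne {K : Type*} [Field K] {Q : Polynomial K} (h2 : DL Q 4 1) : Q.degree ≠ 0 := by
  intro h0
  have h3 := Polynomial.coeff_eq_zero_of_degree_lt (p := Q) (n := 4) (by rw [h0]; norm_num)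
  rw [h2.2] at h3
  exact one_ne_zero h3

theorem DL.root {K : Type*} [Field K] [IsAlgClosed K] {Q : Polynomial K} (h : DL Q 4 1) (E : K) :
    ∃ c, Q.eval c = E := by
  have h2 : DL (Q - Polynomial.C E) 4 1 := by
    have := h.add (((DL.C (-E)).weak (by norm_num : 0 < 4)) : DL (Polynomial.C (-E)) 4 0)
    rw [add_zero] at this
    rwa [sub_eq_add_neg, ← map_neg]
  obtain ⟨c, hc⟩ := IsAlgClosed.exists_root _ h2.deg_ne
  rw [Polynomial.IsRoot, Polynomial.eval_sub, Polynomial.eval_C, sub_eq_zero] at hc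
  exact ⟨c, hc⟩

theorem E4_root {K : Type*} [Field K] [IsAlgClosed K] (a b d e f E : K) :
    ∃ c : K, epoly [a, b, c, d, e, f] c_E4 = E := by
  let vs : Fin 6 → Polynomial K := ![Polynomial.C a, Polynomial.C b, Polynomial.X, Polynomial.C d,
    Polynomial.C e, Polynomial.C f]
  let ds : Fin 6 → ℕ := ![0, 0, 1, 0, 0, 0]
  let cs : Fin 6 → K := ![a, b, 1, d, e, f]
  have hd : ∀ i, DL (vs i) (ds i) (cs i) := by
    intro i
    fin_cases i
    exacts [DL.C _, DL.C _, DL.X, DL.C _, DL.C _, DL.C _]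
  have h := DL_epoly 6 vs ds cs hd 4 c_E4 (by decide +kernel)
  have e1 : (c_E4.filter fun k => hdeg (List.ofFn ds) k == 4) = [400] := by decide +kernel
  rw [e1] at h
  have e2 : epoly (List.ofFn cs) [400] = 1 := by simp [epoly, emon, cs]
  rw [e2] at h
  obtain ⟨c, hc⟩ := h.root E
  refine ⟨c, ?_⟩
  rw [← hc]
  have := map_epoly (Polynomial.evalRingHom c) (List.ofFn vs) c_E4
  rw [Polynomial.coe_evalRingHom] at this
  rw [this]
  congr 1
  simp [vs]

theorem exists_pt {K : Type*} [Field K] [IsAlgClosed K] [Algebra F2 K] (x E p s : K) :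
    ∃ φ : S6 →ₐ[F2] K, φ (X 3) = 0 ∧ φ (gen c_p1) = p ∧ φ (gen c_p2) = s ∧
      φ (gen c_ps) = x ^ 3 + x * p ^ 2 + 1 + s ^ 2 ∧ φ (gen c_E4) = E ∧ φ (gen c_D4) = x ^ 2 ∧
      φ (gen c_p3) = x + x * s + p ∧
      φ (gen c_g5) = x ^ 7 + x ^ 4 + x ^ 3 * p ^ 4 + x + x * s ^ 4 + p ^ 4 ∧
      φ (gen c_D6) = 1 ∧ φ (gen c_L) = 0 := by
  haveI : CharP K 2 := charP_of_injective_algebraMap (algebraMap F2 K).injective 2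
  obtain ⟨e, he⟩ : ∃ e : K, e ^ 3 + x * e + 1 = 0 := by
    have hd : (Polynomial.X ^ 3 + Polynomial.C x * Polynomial.X + 1 : Polynomial K).degree ≠ 0 := by
      have : (Polynomial.X ^ 3 + Polynomial.C x * Polynomial.X + 1 : Polynomial K).degree = 3 := by
        compute_degree!
      rw [this]; norm_num
    obtain ⟨e, he⟩ := IsAlgClosed.exists_root _ hd
    exact ⟨e, by simpa using he⟩
  obtain ⟨f, hf⟩ : ∃ f : K, f ^ 2 + e * f + (e ^ 2 + x) = 0 := by
    have hd : (Polynomial.X ^ 2 + Polynomial.C e * Polynomial.X + Polynomial.C (e ^ 2 + x) : Polynomial K).degree ≠ 0 := by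
      have : (Polynomial.X ^ 2 + Polynomial.C e * Polynomial.X + Polynomial.C (e ^ 2 + x) : Polynomial K).degree = 2 := by
        compute_degree!
      rw [this]; norm_num
    obtain ⟨f, hf⟩ := IsAlgClosed.exists_root _ hd
    refine ⟨f, ?_⟩
    rw [Polynomial.IsRoot] at hf
    simp only [Polynomial.eval_add, Polynomial.eval_mul, Polynomial.eval_pow, Polynomial.eval_X,
      Polynomial.eval_C] at hf
    exact hf
  obtain ⟨c, hc⟩ := E4_root (f * s + f ^ 2 * (p + x)) (e * s + e ^ 2 * (p + x)) 0 e f E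
  have h3 : f ^ 3 = x * f + 1 := by grind
  obtain ⟨φ, h30, hφ⟩ : ∃ φ : S6 →ₐ[F2] K, φ (X 3) = 0 ∧ ∀ l, φ (gen l) =
      epoly [f * s + f ^ 2 * (p + x), e * s + e ^ 2 * (p + x), c, 0, e, f] l := by
    let φ : S6 →ₐ[F2] K := aeval ![f * s + f ^ 2 * (p + x), e * s + e ^ 2 * (p + x), c, 0, e, f]
    refine ⟨φ, by simp [φ], ?_⟩
    intro l
    have := map_epoly (φ : S6 →+* K) Xs l
    rw [gen]
    refine this.trans ?_
    congr 1
    simp [Xs, φ]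
  refine ⟨φ, ?_, ?_, ?_, ?_, ?_, ?_, ?_, ?_, ?_, ?_⟩
  · exact h30
  · rw [hφ]; simp [epoly, emon, c_p1]; clear hφ hc h30; clear φ c; grind
  · rw [hφ]; simp [epoly, emon, c_p2]; clear hφ hc h30; clear φ c; grind
  · rw [hφ]; simp [epoly, emon, c_ps]; clear hφ hc h30; clear φ c; grind
  · rw [hφ, hc]
  · rw [hφ]; simp [epoly, emon, c_D4]; clear hφ hc h30; clear φ c; grind
  · rw [hφ]; simp [epoly, emon, c_p3]; clear hφ hc h30; clear φ c; grind
  · rw [hφ]; simp [epoly, emon, c_g5]; clear hφ hc h30; clear φ c; grind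
  · rw [hφ]; simp [epoly, emon, c_D6]; clear hφ hc h30; clear φ c; grind
  · rw [hφ]; simp [epoly, emon, c_L]

end pt


section pt2

theorem emon_congr {K : Type*} [CommRing K] (u w : Fin 11 → K) (h : ∀ i, i ≠ 4 → i ≠ 5 → u i = w i)
    (h10 : u 10 = 0) (k : ℕ) (hk : (dig k 4 = 0 ∧ dig k 5 = 0) ∨ dig k 10 ≠ 0) :
    emon (List.ofFn u) k = emon (List.ofFn w) k := by
  rw [emon_ofFn, emon_ofFn]
  rcases hk with ⟨h4, h5⟩ | hk
  · refine Finset.prod_congr rfl fun i _ => ?_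
    by_cases i4 : i = 4
    · subst i4
      have : k / 10 ^ ((4 : Fin 11) : ℕ) % 10 = 0 := h4
      rw [this, pow_zero, pow_zero]
    · by_cases i5 : i = 5
      · subst i5
        have : k / 10 ^ ((5 : Fin 11) : ℕ) % 10 = 0 := h5
        rw [this, pow_zero, pow_zero]
      · rw [h i i4 i5]
  · have hw : w 10 = 0 := by rw [← h 10 (by decide) (by decide), h10]
    have hk' : k / 10 ^ ((10 : Fin 11) : ℕ) % 10 ≠ 0 := hk
    rw [Finset.prod_eq_zero (Finset.mem_univ 10), Finset.prod_eq_zero (Finset.mem_univ 10)]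
    · rw [hw, zero_pow hk']
    · rw [h10, zero_pow hk']

theorem epoly_congr {K : Type*} [CommRing K] (u w : Fin 11 → K) (h : ∀ i, i ≠ 4 → i ≠ 5 → u i = w i)
    (h10 : u 10 = 0) (l : List ℕ)
    (hl : (l.all fun k => decide ((dig k 4 = 0 ∧ dig k 5 = 0) ∨ dig k 10 ≠ 0)) = true) :
    epoly (List.ofFn u) l = epoly (List.ofFn w) l := by
  rw [epoly, epoly]
  congr 1
  apply List.map_congr_left
  intro k hk
  exact emon_congr u w h h10 k (by simpa using List.all_eq_true.mp hl k hk)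

theorem rule_pt {K : Type*} [CommRing K] [Algebra F2 K] (φ : S6 →ₐ[F2] K) (ι : B4 →ₐ[F2] K)
    (h : ∀ i, i ≠ 4 → i ≠ 5 → φ (gv i) = ι (v0 i)) (r : ℕ × List ℕ) (hr : r ∈ rules2)
    (hl : (r.2.all fun k => decide ((dig k 4 = 0 ∧ dig k 5 = 0) ∨ dig k 10 ≠ 0)) = true) :
    φ (mono (dig r.1)) = ι (epoly (List.ofFn v0) r.2) := by
  have h1 := rules_valid r (List.mem_append_left _ hr)
  rw [emon_gens] at h1
  rw [h1, gens_ofFn]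
  have h2 := map_epoly (φ : S6 →+* K) (List.ofFn gv) r.2
  have h3 := map_epoly (ι : B4 →+* K) (List.ofFn v0) r.2
  rw [List.map_ofFn] at h2 h3
  refine h2.trans (Eq.trans ?_ h3.symm)
  refine epoly_congr _ _ h ?_ _ hl
  exact (h 10 (by decide) (by decide)).trans (by simp [v0])

theorem exists_pt2 {K : Type*} [Field K] [IsAlgClosed K] [Algebra F2 K] (ι : B4 →ₐ[F2] K) :
    ∃ φ : S6 →ₐ[F2] K, φ (X 3) = 0 ∧ ∀ i, φ (gv i) = ι (v1 i) := by
  obtain ⟨φ, h3, k0, k1, k2, k3, k6, k7, k8, k9, k10⟩ := exists_pt (ι x4) (ι E4') (ι p4) (ι s4)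
  have h : ∀ i, i ≠ 4 → i ≠ 5 → φ (gv i) = ι (v0 i) := by
    have e0 : φ (gv 0) = ι (v0 0) := k0
    have e1 : φ (gv 1) = ι (v0 1) := k1
    have e2 : φ (gv 2) = ι (v0 2) := k2.trans (by simp [v0])
    have e3 : φ (gv 3) = ι (v0 3) := k3
    have e6 : φ (gv 6) = ι (v0 6) := k6.trans (by simp [v0])
    have e7 : φ (gv 7) = ι (v0 7) := k7.trans (by simp [v0])
    have e8 : φ (gv 8) = ι (v0 8) := k8.trans (by simp [v0])
    have e9 : φ (gv 9) = ι (v0 9) := k9.trans (by simp [v0])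
    have e10 : φ (gv 10) = ι (v0 10) := k10.trans (by simp [v0])
    intro i i4 i5
    fin_cases i
    exacts [e0, e1, e2, e3, absurd rfl i4, absurd rfl i5, e6, e7, e8, e9, e10]
  have q9 : φ (gv 9) = 1 := k9
  refine ⟨φ, h3, ?_⟩
  intro i
  by_cases i4 : i = 4
  · have := rule_pt φ ι h (1000010000, tail6) (by decide +kernel) (by decide +kernel)
    have e : dig 1000010000 = ![0,0,0,0,1,0,0,0,0,1,0] := by decide +kernel
    simp only [e, mono] at this
    simp only [v1, i4, if_true]
    rw [vE6, ← this]
    simp [Fin.prod_univ_succ, q9]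
  · by_cases i5 : i = 5
    · have := rule_pt φ ι h (1000100000, tail7) (by decide +kernel) (by decide +kernel)
      have e : dig 1000100000 = ![0,0,0,0,0,1,0,0,0,1,0] := by decide +kernel
      simp only [e, mono] at this
      rw [v1, if_neg i4, if_pos i5, i5]
      rw [vE7, ← this]
      simp [Fin.prod_univ_succ, q9]
    · simp only [v1, i4, i5, if_false]
      exact h i i4 i5

theorem exists_K : ∃ (K : Type) (_ : Field K) (_ : IsAlgClosed K) (_ : Algebra F2 K)
    (ι : B4 →ₐ[F2] K), Function.Injective ι := by
  refine ⟨AlgebraicClosure (FractionRing B4), inferInstance, inferInstance, inferInstance,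
    (IsScalarTower.toAlgHom F2 (FractionRing B4) (AlgebraicClosure (FractionRing B4))).comp
      (IsScalarTower.toAlgHom F2 B4 (FractionRing B4)), ?_⟩
  rw [AlgHom.coe_comp]
  exact (algebraMap (FractionRing B4) (AlgebraicClosure (FractionRing B4))).injective.comp
    (IsFractionRing.injective B4 (FractionRing B4))

theorem hom_Phi {K : Type*} [CommRing K] [Algebra F2 K] (φ : S6 →ₐ[F2] K) (p : S6) (n : ℕ)
    (hp : p.IsHomogeneous n) : aeval (fun i => Polynomial.C (φ (X i)) * Polynomial.X) p =
      Polynomial.C (φ p) * Polynomial.X ^ n := by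
  rw [p.as_sum, map_sum, map_sum, map_sum, Finset.sum_mul]
  refine Finset.sum_congr rfl fun d hd => ?_
  have hn : ∑ i, d i = n := by
    have := hp (mem_support_iff.mp hd)
    rw [← this, Finsupp.weight_apply, Finsupp.sum_fintype _ _ (by simp)]
    simp
  rw [monomial_eq, map_mul, map_mul, map_mul, Finsupp.prod_fintype _ _ (by simp), map_prod, map_prod,
    map_prod, ← hn, ← Finset.prod_pow_eq_pow_sum, mul_assoc, ← Finset.prod_mul_distrib]
  congr 1
  · rw [← algebraMap_eq, AlgHom.commutes, AlgHom.commutes]; rfl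
  · refine Finset.prod_congr rfl fun i _ => ?_
    rw [map_pow, map_pow, map_pow, aeval_X, mul_pow]

theorem mono_hom (m : Fin 11 → ℕ) : (mono m).IsHomogeneous (nd m) := by
  have h := gens_hom
  rw [gens_ofFn] at h
  simp only [List.ofFn_succ, List.ofFn_zero, gdeg, List.forall₂_cons] at h
  obtain ⟨h0, h1, h2, h3, h4, h5, h6, h7, h8, h9, h10, -⟩ := h
  have hh : ∀ i, (gv i).IsHomogeneous (![2, 3, 3, 4, 6, 7, 4, 5, 5, 6, 7] i) := by
    intro i
    fin_cases i
    exacts [h0, h1, h2, h3, h4, h5, h6, h7, h8, h9, h10]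
  have := IsHomogeneous.prod Finset.univ (fun i => gv i ^ m i) _ (fun i _ => (hh i).pow (m i))
  rw [mono]
  convert this using 1
  simp [Fin.sum_univ_succ, nd]
  ring

theorem keyLI (l : (Fin 11 → ℕ) →₀ F2) (hl : l ∈ Finsupp.supported F2 F2 Std)
    (h : X 3 ∣ Finsupp.linearCombination F2 mono l) : l = 0 := by
  obtain ⟨K, _, _, _, ι, hι⟩ := exists_K
  obtain ⟨φ, h3, hφ⟩ := exists_pt2 ι
  let Φ : S6 →ₐ[F2] Polynomial K := aeval (fun i => Polynomial.C (φ (X i)) * Polynomial.X)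
  have hv : ∀ m, φ (mono m) = ι (vmon m) := by
    intro m
    rw [mono, vmon, map_prod, map_prod]
    refine Finset.prod_congr rfl fun i _ => ?_
    rw [map_pow, map_pow, hφ]
  have hΦ : ∀ m, Φ (mono m) = Polynomial.C (ι (vmon m)) * Polynomial.X ^ (nd m) := by
    intro m
    rw [← hv]
    exact hom_Phi φ _ _ (mono_hom m)
  have hLI : LinearIndepOn F2 (fun m => Φ (mono m)) Std := by
    refine polyLI _ nd Std ?_ ?_
    · intro m _
      rw [hΦ]
      exact Polynomial.natDegree_C_mul_X_pow_le _ _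
    · intro N
      have := vmon_LI {m | m ∈ Std ∧ nd m = N} N (fun m hm => hm)
      have h2 := this.map_injOn ι.toLinearMap (hι.injOn)
      refine h2.congr ?_
      intro m _
      simp only [hΦ]
      simp
  rw [linearIndepOn_iff] at hLI
  apply hLI l hl
  have hz : Φ (Finsupp.linearCombination F2 mono l) = 0 := by
    obtain ⟨q, hq⟩ := h
    rw [hq, map_mul]
    have : Φ (X 3) = 0 := by simp [Φ, h3]
    rw [this, zero_mul]
  rw [Finsupp.linearCombination_apply, Finsupp.sum, map_sum] at hz
  rw [Finsupp.linearCombination_apply, Finsupp.sum]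
  refine Eq.trans (Finset.sum_congr rfl fun m _ => ?_) hz
  rw [map_smul]

end pt2


section fin

theorem L_div : X 3 ∣ gL := by
  refine ⟨X 4^2*X 5^4+X 4^4*X 5^2+X 3*X 4*X 5^4+X 3*X 4^4*X 5+X 3^3*X 4*X 5^2+X 3^3*X 4^2*X 5, ?_⟩
  rw [L_eq]; ring

theorem L_ne : gL ≠ 0 := by
  intro h
  have : (aeval ![0, 0, 0, 1, Polynomial.X, Polynomial.X ^ 3] gL : Polynomial F2).coeff 14 = 1 := by
    rw [L_eq]
    simp [Polynomial.coeff_X, Polynomial.coeff_X_pow, ← pow_mul, ← pow_add, ← pow_succ, ← pow_succ']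
  rw [h] at this
  simp at this

theorem cancelL (u : S6) (h : gL * u ∈ A0) : u ∈ A0 := by
  obtain ⟨l, hl, a', ha', e⟩ := span2 _ h
  have h0 : l = 0 := by
    apply keyLI l hl
    have : Finsupp.linearCombination F2 mono l = gL * (u - a') := by rw [mul_sub, e]; ring
    rw [this]
    exact L_div.mul_right _
  rw [h0, map_zero, zero_add] at e
  rw [mul_left_cancel₀ L_ne e]
  exact ha'

theorem cancelLk (k : ℕ) (u : S6) (h : gL ^ k * u ∈ A0) : u ∈ A0 := by
  induction k with
  | zero => simpa using h
  | succ k ih =>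
    apply ih
    apply cancelL
    rwa [← mul_assoc, ← pow_succ']

theorem Q_A0 (t : S6) (ht : t ∈ Qset) : t ∈ A0 := by
  apply Algebra.subset_adjoin
  rcases ht with rfl | rfl | rfl | rfl | rfl | rfl
  exacts [⟨6, rfl⟩, ⟨9, rfl⟩, ⟨10, rfl⟩, ⟨0, rfl⟩, ⟨1, rfl⟩, ⟨7, rfl⟩]

theorem inv_A0 (u : S6) : (alH u = u ∧ beH u = u) ↔ u ∈ A0 := by
  constructor
  · rintro ⟨h1, h2⟩
    obtain ⟨k, hk⟩ := step1 u h1 h2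
    exact cancelLk k u (Algebra.adjoin_le (S := A0) Q_A0 hk)
  · intro hu
    have hg : ∀ i, gv i ∈ gens := fun i => by rw [gens_ofFn]; exact List.mem_ofFn.mpr ⟨i, rfl⟩
    have h1 : A0 ≤ AlgHom.equalizer alH (AlgHom.id F2 S6) :=
      Algebra.adjoin_le (by rintro _ ⟨i, rfl⟩; exact gens_al _ (hg i))
    have h2 : A0 ≤ AlgHom.equalizer beH (AlgHom.id F2 S6) :=
      Algebra.adjoin_le (by rintro _ ⟨i, rfl⟩; exact gens_be _ (hg i))
    exact ⟨h1 hu, h2 hu⟩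

theorem R_A0 : Rsub ≤ A0 := Algebra.adjoin_mono (by rintro _ ⟨i, rfl⟩; exact ⟨_, rfl⟩)

noncomputable def A0R : Subalgebra Rsub S6 where
  carrier := A0
  mul_mem' := A0.mul_mem
  one_mem' := A0.one_mem
  add_mem' := A0.add_mem
  zero_mem' := A0.zero_mem
  algebraMap_mem' := fun r => R_A0 r.2

theorem A0_int (a : S6) (ha : a ∈ A0) : IsIntegral Rsub a := by
  refine IsIntegral.of_mem_of_fg A0R ?_ a ha
  have : Subalgebra.toSubmodule A0R = Submodule.span Rsub (mono '' Box) := by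
    apply le_antisymm
    · intro x hx; exact span3 x hx
    · rw [Submodule.span_le]
      rintro _ ⟨m, _, rfl⟩
      exact mono_mem m
  rw [this]
  exact Submodule.fg_span (Box_finite.image _)

theorem dick (x : S6) (hx : x ^ 8 + gD4 * x ^ 4 + gD6 * x ^ 2 + gL * x = 0) : IsIntegral Rsub x := by
  let C := integralClosure Rsub S6
  have hC : ∀ t ∈ Qset, t ∈ C := fun t ht => A0_int t (Q_A0 t ht)
  let c4 : C := ⟨gD4, hC _ (by simp [Qset])⟩
  let c2 : C := ⟨gD6, hC _ (by simp [Qset])⟩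
  let c1 : C := ⟨gL, hC _ (by simp [Qset])⟩
  have : IsIntegral C x := by
    refine ⟨Polynomial.X ^ 8 + (Polynomial.C c4 * Polynomial.X ^ 4 + Polynomial.C c2 * Polynomial.X ^ 2
      + Polynomial.C c1 * Polynomial.X), ?_, ?_⟩
    · apply Polynomial.monic_X_pow_add
      compute_degree
      norm_num
    · simp only [Polynomial.eval₂_add, Polynomial.eval₂_mul, Polynomial.eval₂_pow, Polynomial.eval₂_X,
        Polynomial.eval₂_C]
      rw [← hx]
      simp only [← add_assoc]
      rfl
  exact isIntegral_trans x this

theorem d_int : IsIntegral Rsub (X 3 : S6) := dick _ (by rw [D4_eq, D6_eq, L_eq]; grind)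
theorem e_int : IsIntegral Rsub (X 4 : S6) := dick _ (by rw [D4_eq, D6_eq, L_eq]; grind)
theorem f_int : IsIntegral Rsub (X 5 : S6) := dick _ (by rw [D4_eq, D6_eq, L_eq]; grind)

theorem all_alg (u : S6) : IsAlgebraic Rsub u := by
  obtain ⟨k, hk⟩ := cramer u
  have h : IsIntegral Rsub (gL ^ k * u) := by
    have : Algebra.adjoin F2 (Qset ∪ {X 3} ∪ {X 4} ∪ {X 5}) ≤ (integralClosure Rsub S6).restrictScalars F2 := by
      apply Algebra.adjoin_le
      rintro t (((ht | rfl) | rfl) | rfl)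
      exacts [A0_int t (Q_A0 t ht), d_int, e_int, f_int]
    exact this hk
  refine IsAlgebraic.of_mul (y := gL ^ k) (mem_nonZeroDivisors_of_ne_zero (pow_ne_zero k L_ne)) ?_ h.isAlgebraic
  exact ((A0_int gL (Q_A0 _ (by simp [Qset]))).pow k).isAlgebraic

theorem w_ind : AlgebraicIndependent F2 (fun i : Fin 6 => gv (Fin.castLE (by norm_num) i)) := by
  haveI : Algebra.IsAlgebraic (Algebra.adjoin F2 (Set.range fun i : Fin 6 => gv (Fin.castLE (by norm_num) i))) S6 :=
    ⟨all_alg⟩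
  refine (Algebra.IsAlgebraic.isTranscendenceBasis_of_le_trdeg_of_finite F2 _ ?_).1
  rw [MvPolynomial.trdeg_of_isDomain]
  simp

theorem gv_deg (i : Fin 11) : (gv i).IsHomogeneous (![2, 3, 3, 4, 6, 7, 4, 5, 5, 6, 7] i) := by
  have h := gens_hom
  rw [gens_ofFn] at h
  simp only [List.ofFn_succ, List.ofFn_zero, gdeg, List.forall₂_cons] at h
  obtain ⟨h0, h1, h2, h3, h4, h5, h6, h7, h8, h9, h10, -⟩ := h
  fin_cases i
  exacts [h0, h1, h2, h3, h4, h5, h6, h7, h8, h9, h10]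

end fin

/-- The invariant ring `S[W'^*]^G` is generated as an `𝔽₂`-algebra by
`11` homogeneous invariants, namely a homogeneous system of parameters of degrees
`2, 3, 3, 4, 6, 7` together with `5` further homogeneous invariants of degrees
`4, 5, 5, 6, 7`; in particular, `S[W'^*]^G` is generated as an `𝔽₂`-algebra by
invariants of degree at most `7`. -/
theorem stmt16 (D : G3 →* GL (Fin 6) F2)
    (hA : (D Agen : Matrix (Fin 6) (Fin 6) F2) = DA6)
    (hB : (D Bgen : Matrix (Fin 6) (Fin 6) F2) = DB6) :
    ∃ f : Fin 6 → (invG D),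
      -- `f` is a homogeneous system of parameters of degrees `2, 3, 3, 4, 6, 7` …
      AlgebraicIndependent F2 f ∧
      (∀ i, (f i : MvPolynomial (Fin 6) F2).IsHomogeneous (![2, 3, 3, 4, 6, 7] i)) ∧
      Module.Finite (Algebra.adjoin F2 (Set.range f)) (invG D) ∧
      -- … and together with `5` further homogeneous invariants of degrees `4, 5, 5, 6, 7`
      -- it generates `S[W'^*]^G` as an `𝔽₂`-algebra:
      ∃ g : Fin 5 → (invG D),
        (∀ j, (g j : MvPolynomial (Fin 6) F2).IsHomogeneous (![4, 5, 5, 6, 7] j)) ∧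
        Algebra.adjoin F2 (Set.range f ∪ Set.range g) = (⊤ : Subalgebra F2 (invG D)) := by
  have hI : ∀ p, p ∈ invG D ↔ p ∈ A0 := fun p => (mem_invG D hA hB p).trans (inv_A0 p)
  have hg : ∀ i, gv i ∈ invG D := fun i => (hI _).mpr (Algebra.subset_adjoin ⟨i, rfl⟩)
  have hm : ∀ m, mono m ∈ invG D := fun m => (hI _).mpr (mono_mem m)
  let f : Fin 6 → invG D := fun i => ⟨gv (Fin.castLE (by norm_num) i), hg _⟩
  let g : Fin 5 → invG D := fun j => ⟨gv (Fin.natAdd 6 j), hg _⟩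
  refine ⟨f, ?_, ?_, ?_, g, ?_, ?_⟩
  · rw [← AlgHom.algebraicIndependent_iff (invG D).val Subtype.val_injective]
    exact w_ind
  · intro i
    have := gv_deg (Fin.castLE (by norm_num) i)
    fin_cases i <;> exact this
  · have hR : ∀ r ∈ Rsub, ∃ r' : Algebra.adjoin F2 (Set.range f), ((r' : invG D) : S6) = r := by
      intro r hr
      have e : Rsub = (Algebra.adjoin F2 (Set.range f)).map (invG D).val := by
        rw [AlgHom.map_adjoin, ← Set.range_comp]; rfl
      rw [e] at hr
      obtain ⟨r', hr', e'⟩ := hr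
      exact ⟨⟨r', hr'⟩, e'⟩
    let T : Set (invG D) := (fun m => ⟨mono m, hm m⟩) '' Box
    refine ⟨⟨(Box_finite.image (fun m => (⟨mono m, hm m⟩ : invG D))).toFinset, ?_⟩⟩
    rw [Set.Finite.coe_toFinset, eq_top_iff]
    rintro a -
    have ha := span3 a ((hI _).mp a.2)
    have key : ∀ x ∈ Submodule.span Rsub (mono '' Box), ∃ b ∈ Submodule.span
        (Algebra.adjoin F2 (Set.range f)) T, ((b : invG D) : S6) = x := by
      intro x hx
      induction hx using Submodule.span_induction with
      | mem x hx =>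
        obtain ⟨m, hmB, rfl⟩ := hx
        exact ⟨⟨mono m, hm m⟩, Submodule.subset_span ⟨m, hmB, rfl⟩, rfl⟩
      | zero => exact ⟨0, Submodule.zero_mem _, rfl⟩
      | add x y _ _ hx hy =>
        obtain ⟨b, hb, rfl⟩ := hx
        obtain ⟨c, hc, rfl⟩ := hy
        exact ⟨b + c, Submodule.add_mem _ hb hc, rfl⟩
      | smul r x _ hx =>
        obtain ⟨b, hb, rfl⟩ := hx
        obtain ⟨r', hr'⟩ := hR r r.2
        refine ⟨r' • b, Submodule.smul_mem _ _ hb, ?_⟩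
        change ((r' : invG D) : S6) * (b : S6) = (r : S6) * b
        rw [hr']
    obtain ⟨b, hb, e⟩ := key a ha
    rwa [← Subtype.ext e]
  · intro j
    have := gv_deg (Fin.natAdd 6 j)
    fin_cases j <;> exact this
  · rw [eq_top_iff]
    rintro a -
    have ha : (a : S6) ∈ A0 := (hI _).mp a.2
    have hle : A0 ≤ (Algebra.adjoin F2 (Set.range f ∪ Set.range g)).map (invG D).val := by
      rw [AlgHom.map_adjoin]
      apply Algebra.adjoin_mono
      rintro _ ⟨i, rfl⟩
      refine ⟨⟨gv i, hg i⟩, ?_, rfl⟩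
      refine Fin.addCases (m := 6) (n := 5) (motive := fun i => (⟨gv i, hg i⟩ : invG D) ∈ Set.range f ∪ Set.range g)
        (fun i => ?_) (fun j => ?_) i
      · exact Or.inl ⟨i, rfl⟩
      · exact Or.inr ⟨j, rfl⟩
    obtain ⟨b, hb, e⟩ := hle ha
    rwa [← Subtype.ext (a1 := b) (a2 := a) e]
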